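/- Let p be a prime, let F be a finite extension of ℚ_p, and let K/F be a finite Galois extension with abelian Galois group. Then the subgroup 𝒪_F^× ∩ N_{K/F}(K^×) has finite index in 𝒪_F^×, equal to the ramification index e(K/F). If moreover K/F is tamely ramified (i.e. p ∤ e(K/F)), then the quotient group 𝒪_F^×/(𝒪_F^× ∩ N_{K/F}(K^×)) is cyclic. -/

import Mathlib

/-- The unit group of the ring of integers (= integral closure of `ℤ_p`) of a `p`-adic field,
viewed as a subgroup of the unit group of the field: those units that are integral with
integral inverse. -/
def integerUnits (R F : Type*) [CommRing R] [Field F] [Algebra R F] : Subgroup Fˣ where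
  carrier := {x : Fˣ | IsIntegral R ((x : Fˣ) : F) ∧ IsIntegral R (((x⁻¹ : Fˣ) : F))}
  one_mem' := by
    refine ⟨by simpa using isIntegral_one, ?_⟩
    simpa using (isIntegral_one : IsIntegral R (1 : F))
  mul_mem' := by
    rintro a b ⟨ha1, ha2⟩ ⟨hb1, hb2⟩
    constructor
    · simpa using ha1.mul hb1
    · simpa [mul_comm] using ha2.mul hb2
  inv_mem' := by
    rintro a ⟨h1, h2⟩
    exact ⟨h2, by simpa using h1⟩

/-!
The norm index of units is bounded by `e(K/F)` from above by Herbrand quotients and from below by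
comparing norms of uniformizers.

Upper bound. Let `K/F` be cyclic. For the supremum norm of a normal basis, the units close to `1`
form a subgroup of finite index in `𝒪_K^×` which behaves like an induced Galois module. Hence the
Herbrand quotient of `𝒪_K^×` is trivial, and with Hilbert 90 the norm index of units is `e(K/F)`.
Climbing a tower of cyclic steps, the norm index divides `e(K/F)` for every abelian `K/F`. In
particular units are norms of units in unramified extensions, so adjoining to `K` roots of unity of
order prime to `p` changes neither the index nor `e(K/F)`.

Lower bound. After such an adjunction, giving a field `L`, the Galois group is `⟨φ⟩ × I`, where `I`
is the inertia group and the order of `φ` annihilates `I`. For `τ ∈ I`, `L` is unramified over the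
fixed field `M_τ` of `φτ`, which therefore contains a uniformizer `x_τ` of `L`. The quotients
`N_{M_σ/F}(x_σ) / N_{M_τ/F}(x_τ)` are units of `F`. If one of them is the norm of a unit of `L`,
then `σ = τ`: a character of `I` separating `σ` from `τ` would cut out a cyclic extension in which
Hilbert 90 is incompatible with the valuations. So there are at least `|I| = e(K/F)` classes.

Cyclicity. If `p ∤ e`, principal units are `e`-th powers, hence lie in every subgroup of index `e`,
and the quotient of the units by such a subgroup is a quotient of the cyclic group of units of the
residue field.
-/

namespace PadicField

section AlgebraNorm

lemma sum_le_of_isNonarchimedean {Φ M ι : Type*} [AddCommMonoid M] [FunLike Φ M ℝ]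
    [ZeroHomClass Φ M ℝ] {w : Φ} (hw : IsNonarchimedean w) {s : Finset ι} {f : ι → M} {c : ℝ}
    (hc : 0 ≤ c) (h : ∀ i ∈ s, w (f i) ≤ c) : w (∑ i ∈ s, f i) ≤ c := by
  rcases s.eq_empty_or_nonempty with rfl | hs
  · simpa using hc
  · exact (hw.apply_sum_le_sup hs).trans (Finset.sup'_le hs _ h)

variable {k : Type*} [NontriviallyNormedField k] {R S : Type*} [Ring R] [Algebra k R]
  [Ring S] [Algebra k S]

/-- The normed space structure over `k` on a `k`-algebra carrying an algebra norm. -/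
abbrev normedSpaceOfAlgebraNorm (w : AlgebraNorm k R) :
    letI := w.toRingNorm.toNormedRing
    NormedSpace k R :=
  letI := w.toRingNorm.toNormedRing
  { norm_smul_le := fun c x => (map_smul_eq_mul w c x).le }

variable [FiniteDimensional k R]

lemma exists_norm_le_mul_norm [CompleteSpace k] (w : AlgebraNorm k R) (w' : AlgebraNorm k S)
    (l : R →ₗ[k] S) : ∃ D, 0 ≤ D ∧ ∀ x, w' (l x) ≤ D * w x := by
  let _ := w.toRingNorm.toNormedRing
  let _ := normedSpaceOfAlgebraNorm w
  let _ := w'.toRingNorm.toNormedRing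
  let _ := normedSpaceOfAlgebraNorm w'
  exact ⟨‖LinearMap.toContinuousLinearMap l‖, norm_nonneg _,
    (LinearMap.toContinuousLinearMap l).le_opNorm⟩

lemma exists_norm_sub_le_of_geometric [CompleteSpace k] {w : AlgebraNorm k R}
    (hw : IsNonarchimedean w) {a : ℕ → R} {C r : ℝ} (hr0 : 0 ≤ r) (hr1 : r < 1)
    (ha : ∀ n, w (a (n + 1) - a n) ≤ C * r ^ n) : ∃ l, ∀ n, w (l - a n) ≤ C * r ^ n := by
  let _ := w.toRingNorm.toNormedRing
  let _ := normedSpaceOfAlgebraNorm w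
  have : CompleteSpace R := FiniteDimensional.complete k R
  have hC : 0 ≤ C := by simpa using (apply_nonneg w _).trans (ha 0)
  obtain ⟨l, hl⟩ := cauchySeq_tendsto_of_complete <| cauchySeq_of_le_geometric r C hr1
    (f := a) fun n => by rw [dist_comm, dist_eq_norm]; exact ha n
  have htail (n j : ℕ) : w (a (j + n) - a n) ≤ C * r ^ n := by
    have htelescope := Finset.sum_range_sub (fun i => a (n + i)) j
    rw [add_zero] at htelescope
    rw [add_comm j, ← htelescope]
    exact sum_le_of_isNonarchimedean hw (by positivity) fun i _ => (ha (n + i)).trans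
      (mul_le_mul_of_nonneg_left (pow_le_pow_of_le_one hr0 hr1.le (n.le_add_right i)) hC)
  exact ⟨l, fun n => le_of_tendsto' (x := Filter.atTop)
    (((Filter.tendsto_add_atTop_iff_nat n).2 hl).sub_const (a n)).norm (htail n)⟩

lemma exists_finite_cover [ProperSpace k] (w : AlgebraNorm k R) {c : ℝ} (hc : 0 < c) :
    ∃ T : Set R, T.Finite ∧ ∀ x, w x ≤ 1 → ∃ t ∈ T, w (x - t) < c := by
  let _ := w.toRingNorm.toNormedRing
  let _ := normedSpaceOfAlgebraNorm w
  have : ProperSpace R := FiniteDimensional.proper k R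
  obtain ⟨T, -, hT, hcover⟩ := (isCompact_closedBall (0 : R) 1).finite_cover_balls hc
  refine ⟨T, hT, fun x hx => ?_⟩
  have hx' : x ∈ Metric.closedBall (0 : R) 1 := by rwa [mem_closedBall_zero_iff]
  obtain ⟨t, ht, hxt⟩ := by simpa only [Set.mem_iUnion, exists_prop] using hcover hx'
  exact ⟨t, ht, by rwa [Metric.mem_ball, dist_eq_norm] at hxt⟩

end AlgebraNorm

section AbsoluteValue

variable (p : ℕ) [Fact p.Prime]
variable (F : Type*) [Field F] [Algebra ℚ_[p] F] [Algebra.IsAlgebraic ℚ_[p] F]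

/-- The extension to `F` of the `p`-adic absolute value, normalized by `|p| = p⁻¹`. -/
noncomputable abbrev absVal : MulAlgebraNorm ℚ_[p] F := spectralMulAlgNorm ℚ_[p] F

variable {F}

lemma isNonarchimedean_absVal : IsNonarchimedean (absVal p F) := isNonarchimedean_spectralNorm

lemma absVal_sub_le_max (x y : F) : absVal p F (x - y) ≤ max (absVal p F x) (absVal p F y) := by
  rw [sub_eq_add_neg, ← map_neg_eq_map _ y]
  exact isNonarchimedean_absVal p _ _

lemma absVal_eq_of_sub_lt {x y : F} (h : absVal p F (x - y) < absVal p F y) :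
    absVal p F x = absVal p F y := by
  simpa using (isNonarchimedean_absVal p).add_eq_right_of_lt h

lemma absVal_pos {x : F} (hx : x ≠ 0) : 0 < absVal p F x := map_pos_of_ne_zero _ hx

lemma absVal_natCast (n : ℕ) : absVal p F n = ‖(n : ℚ_[p])‖ := by
  simpa using (absVal p F).extends_norm (n : ℚ_[p])

lemma absVal_natCast_le_one (n : ℕ) : absVal p F n ≤ 1 := by
  rw [absVal_natCast]
  exact_mod_cast Padic.norm_int_le_one (n : ℤ)

lemma absVal_natCast_lt_one_iff {n : ℕ} : absVal p F n < 1 ↔ p ∣ n := by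
  rw [absVal_natCast]
  exact_mod_cast Padic.norm_intCast_lt_one_iff (k := (n : ℤ))

lemma absVal_prime_pos : 0 < absVal p F p := by
  rw [absVal_natCast, Padic.norm_p, inv_pos]
  exact_mod_cast (Fact.out : p.Prime).pos

end AbsoluteValue

section Tower

variable (p : ℕ) [Fact p.Prime]
variable {F K : Type*} [Field F] [Algebra ℚ_[p] F] [Field K] [Algebra ℚ_[p] K]
  [Algebra.IsAlgebraic ℚ_[p] K] [Algebra F K] [IsScalarTower ℚ_[p] F K]

lemma absVal_algEquiv (σ : Gal(K/F)) (x : K) : absVal p K (σ x) = absVal p K x :=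
  (spectralNorm_eq_of_equiv (σ.restrictScalars ℚ_[p]) x).symm

variable [Algebra.IsAlgebraic ℚ_[p] F]

lemma absVal_algebraMap (x : F) : absVal p K (algebraMap F K x) = absVal p F x :=
  (spectralNorm.eq_of_tower x).symm

lemma absVal_norm [FiniteDimensional F K] [IsGalois F K] (x : K) :
    absVal p F (Algebra.norm F x) = absVal p K x ^ Module.finrank F K := by
  rw [← absVal_algebraMap p (K := K), Algebra.norm_eq_prod_automorphisms, map_prod]
  simp_rw [absVal_algEquiv]
  rw [Finset.prod_const, Finset.card_univ, ← Nat.card_eq_fintype_card,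
    IsGalois.card_aut_eq_finrank]

end Tower

section Integrality

variable (p : ℕ) [Fact p.Prime]
variable {F : Type*} [Field F] [Algebra ℚ_[p] F] [Algebra.IsAlgebraic ℚ_[p] F]
  [Algebra ℤ_[p] F] [IsScalarTower ℤ_[p] ℚ_[p] F]

lemma isIntegral_iff_absVal_le_one {x : F} : IsIntegral ℤ_[p] x ↔ absVal p F x ≤ 1 := by
  have hmonic : (minpoly ℚ_[p] x).Monic := minpoly.monic (Algebra.IsIntegral.isIntegral x)
  rw [show absVal p F x = spectralValue (minpoly ℚ_[p] x) from rfl,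
    spectralValue_le_one_iff hmonic]
  refine ⟨fun hx n => ?_, fun h => ?_⟩
  · rw [minpoly.isIntegrallyClosed_eq_field_fractions' ℚ_[p] hx, Polynomial.coeff_map]
    exact PadicInt.norm_le_one _
  · have hlifts : minpoly ℚ_[p] x ∈ Polynomial.lifts (algebraMap ℤ_[p] ℚ_[p]) :=
      (Polynomial.lifts_iff_coeff_lifts _).2 fun n => ⟨⟨_, h n⟩, rfl⟩
    obtain ⟨q, hq, -, hq_monic⟩ := Polynomial.lifts_and_natDegree_eq_and_monic hlifts hmonic
    refine ⟨q, hq_monic, ?_⟩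
    rw [← Polynomial.aeval_def, ← Polynomial.aeval_map_algebraMap ℚ_[p], hq, minpoly.aeval]

end Integrality

section Units

/-- The homomorphism `Rˣ →* Aˣ` induced by the structure map of an `R`-algebra `A`. -/
abbrev unitsAlgebraMap (R A : Type*) [CommSemiring R] [Semiring A] [Algebra R A] : Rˣ →* Aˣ :=
  Units.map (algebraMap R A).toMonoidHom

/-- The norm of an `R`-algebra `A`, as a homomorphism `Aˣ →* Rˣ`. -/
noncomputable abbrev unitsNorm (R A : Type*) [CommRing R] [Ring A] [Algebra R A] : Aˣ →* Rˣ :=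
  Units.map (Algebra.norm R : A →* R)

variable {F K : Type*} [Field F] [Field K] [Algebra F K]

lemma unitsAlgebraMap_injective : Function.Injective (unitsAlgebraMap F K) :=
  Units.map_injective (algebraMap F K).injective

lemma unitsNorm_smul (g : Gal(K/F)) (u : Kˣ) : unitsNorm F K (g • u) = unitsNorm F K u :=
  Units.ext (Algebra.norm_eq_of_algEquiv g (u : K))

variable [FiniteDimensional F K] [IsGalois F K]

lemma mem_range_unitsAlgebraMap_iff {u : Kˣ} :
    u ∈ (unitsAlgebraMap F K).range ↔ ∀ g : Gal(K/F), g • u = u := by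
  refine ⟨?_, fun h => ?_⟩
  · rintro ⟨x, rfl⟩ g
    exact Units.ext (g.commutes x)
  · obtain ⟨x, hx⟩ := (IsGalois.mem_range_algebraMap_iff_fixed (F := F) (u : K)).2
      fun g => congrArg Units.val (h g)
    have hx0 : x ≠ 0 := by
      rintro rfl
      exact u.ne_zero (by rw [← hx, map_zero])
    exact ⟨Units.mk0 x hx0, Units.ext hx⟩

lemma unitsAlgebraMap_unitsNorm (u : Kˣ) :
    unitsAlgebraMap F K (unitsNorm F K u) = ∏ g : Gal(K/F), g • u := by
  ext
  rw [Units.coe_prod]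
  exact Algebra.norm_eq_prod_automorphisms F (u : K)

end Units

section ValueGroup

variable (p : ℕ) [Fact p.Prime]

section

variable (F : Type*) [Field F] [Algebra ℚ_[p] F] [Algebra.IsAlgebraic ℚ_[p] F]

/-- The absolute value as a homomorphism on the multiplicative group of `F`. -/
noncomputable def unitsAbs : Fˣ →* ℝˣ := Units.map (absVal p F : F →* ℝ)

/-- The unit group `𝒪_F^×`, as the group of elements of absolute value `1`. -/
noncomputable def unitGroup : Subgroup Fˣ := (unitsAbs p F).ker

/-- The value group `|F^×|`. -/
noncomputable def valueGroup : Subgroup ℝˣ := (unitsAbs p F).range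

variable {F}

@[simp] lemma coe_unitsAbs (x : Fˣ) : (unitsAbs p F x : ℝ) = absVal p F x := rfl

lemma unitsAbs_eq_iff {x y : Fˣ} : unitsAbs p F x = unitsAbs p F y ↔ absVal p F x = absVal p F y :=
  Units.ext_iff

lemma mem_unitGroup {x : Fˣ} : x ∈ unitGroup p F ↔ absVal p F x = 1 := Units.ext_iff

lemma unitsAbs_mem_valueGroup (x : Fˣ) : unitsAbs p F x ∈ valueGroup p F := ⟨x, rfl⟩

/-- A uniformizer of `F`: a generator of the maximal ideal of `𝒪_F`, i.e. an element of absolute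
value less than `1` whose absolute value generates the value group. -/
structure IsUniformizer (π : Fˣ) : Prop where
  lt_one : absVal p F π < 1
  valueGroup_eq : valueGroup p F = Subgroup.zpowers (unitsAbs p F π)

variable {p}

lemma IsUniformizer.congr {π ϖ : Fˣ} (hπ : IsUniformizer p π)
    (h : absVal p F ϖ = absVal p F π) : IsUniformizer p ϖ :=
  ⟨h ▸ hπ.lt_one, by rw [hπ.valueGroup_eq, (unitsAbs_eq_iff p).2 h]⟩

lemma IsUniformizer.exists_zpow_eq {π : Fˣ} (hπ : IsUniformizer p π) (x : Fˣ) :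
    ∃ n : ℤ, absVal p F π ^ n = absVal p F x := by
  obtain ⟨n, hn⟩ := hπ.valueGroup_eq ▸ unitsAbs_mem_valueGroup p x
  exact ⟨n, by simpa [Units.ext_iff] using hn⟩

lemma IsUniformizer.absVal_le {π : Fˣ} (hπ : IsUniformizer p π) {x : F}
    (hx : absVal p F x < 1) : absVal p F x ≤ absVal p F π := by
  rcases eq_or_ne x 0 with rfl | hx0
  · simp
  obtain ⟨n, hn⟩ := hπ.exists_zpow_eq (Units.mk0 x hx0)
  have hanti := zpow_right_strictAnti₀ (absVal_pos p π.ne_zero) hπ.lt_one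
  rw [Units.val_mk0] at hn
  rw [← hn, ← zpow_zero (absVal p F π), hanti.lt_iff_gt] at hx
  rw [← hn, ← zpow_one (absVal p F π), ← zpow_mul, one_mul, hanti.le_iff_ge]
  exact hx

end

section

variable {F : Type*} [Field F] [Algebra ℚ_[p] F] [FiniteDimensional ℚ_[p] F]

lemma finite_absVal_Ico {c : ℝ} (hc : 0 < c) : (Set.range (absVal p F) ∩ Set.Ico c 1).Finite := by
  obtain ⟨T, hT, hcover⟩ := exists_finite_cover (absVal p F).toAlgebraNorm hc
  refine (hT.image (absVal p F)).subset ?_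
  rintro _ ⟨⟨x, rfl⟩, hcx, hx1⟩
  obtain ⟨t, ht, hxt⟩ := hcover x hx1.le
  refine ⟨t, ht, absVal_eq_of_sub_lt p ?_⟩
  rw [map_sub_rev]
  exact lt_of_lt_of_le hxt hcx

variable (F) in
lemma exists_isUniformizer : ∃ π : Fˣ, IsUniformizer p π := by
  have hp0 := absVal_prime_pos p (F := F)
  obtain ⟨_, ⟨⟨x, rfl⟩, hpx, hx1⟩, hmax⟩ := (finite_absVal_Ico p (F := F) hp0).exists_maximal
    ⟨_, ⟨p, rfl⟩, le_rfl, (absVal_natCast_lt_one_iff p).2 dvd_rfl⟩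
  have hx0 : 0 < absVal p F x := hp0.trans_le hpx
  have hmax' {y : F} (hy : absVal p F y < 1) : absVal p F y ≤ absVal p F x := by
    by_contra! hxy
    exact hxy.not_ge (hmax ⟨⟨y, rfl⟩, hpx.trans hxy.le, hy⟩ hxy.le)
  refine ⟨Units.mk0 x ((map_ne_zero _).1 hx0.ne'), hx1, le_antisymm ?_ ?_⟩
  · rintro _ ⟨y, rfl⟩
    obtain ⟨n, hn_lt, hn_le⟩ := exists_mem_Ioc_zpow (absVal_pos p y.ne_zero)
      ((one_lt_inv₀ hx0).2 hx1)
    refine ⟨-(n + 1), ?_⟩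
    simp only [Units.ext_iff, Units.val_zpow_eq_zpow_val, coe_unitsAbs, Units.val_mk0]
    rw [inv_zpow'] at hn_lt hn_le
    refine (hn_le.antisymm ?_).symm
    by_contra! hlt
    have hlt_one : absVal p F (y * x ^ (n + 1)) < 1 := by
      rw [map_mul, map_zpow₀]
      rwa [zpow_neg, ← one_div, lt_div_iff₀ (zpow_pos hx0 _)] at hlt
    have hle := hmax' hlt_one
    rw [map_mul, map_zpow₀, zpow_add_one₀ hx0.ne', ← mul_assoc,
      mul_le_iff_le_one_left hx0, ← le_div_iff₀ (zpow_pos hx0 _), one_div, ← zpow_neg] at hle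
    exact hle.not_gt hn_lt
  · rw [Subgroup.zpowers_le]
    exact unitsAbs_mem_valueGroup p _

end

end ValueGroup

section RelIndex

variable {G : Type*} [CommGroup G]

lemma relIndex_zpowers_dvd_of_pow_mem {H : Subgroup G} {x : G} {n : ℕ} (hx : x ^ n ∈ H) :
    H.relIndex (Subgroup.zpowers x) ∣ n := by
  have : IsCyclic (Subgroup.zpowers x ⧸ H.subgroupOf (Subgroup.zpowers x)) :=
    isCyclic_of_surjective (QuotientGroup.mk' _) (QuotientGroup.mk'_surjective _)
  rw [Subgroup.relIndex, Subgroup.index, ← IsCyclic.exponent_eq_card,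
    Monoid.exponent_dvd_iff_forall_pow_eq_one]
  intro q
  obtain ⟨⟨_, k, rfl⟩, rfl⟩ := QuotientGroup.mk_surjective q
  rw [← QuotientGroup.mk_pow, QuotientGroup.eq_one_iff, Subgroup.mem_subgroupOf]
  simpa [← zpow_natCast, zpow_comm x] using H.zpow_mem hx k

end RelIndex

section RamificationIndex

variable (p : ℕ) [Fact p.Prime]
variable (F : Type*) [Field F] [Algebra ℚ_[p] F] [Algebra.IsAlgebraic ℚ_[p] F]
  (K : Type*) [Field K] [Algebra ℚ_[p] K] [Algebra.IsAlgebraic ℚ_[p] K] [Algebra F K]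

/-- The ramification index `e(K/F)`, encoded as the index of the value group of `F` in that
of `K`. -/
noncomputable def ramificationIndex : ℕ := (valueGroup p F).relIndex (valueGroup p K)

variable [IsScalarTower ℚ_[p] F K] {F K}

@[simp] lemma unitsAbs_unitsAlgebraMap (x : Fˣ) :
    unitsAbs p K (unitsAlgebraMap F K x) = unitsAbs p F x := by
  ext
  rw [coe_unitsAbs, coe_unitsAbs, ← absVal_algebraMap (K := K) p (x : F)]
  rfl

lemma unitsAlgebraMap_mem_unitGroup {x : Fˣ} :
    unitsAlgebraMap F K x ∈ unitGroup p K ↔ x ∈ unitGroup p F := by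
  rw [unitGroup, unitGroup, MonoidHom.mem_ker, MonoidHom.mem_ker, unitsAbs_unitsAlgebraMap]

lemma map_range_unitsAlgebraMap :
    (unitsAlgebraMap F K).range.map (unitsAbs p K) = valueGroup p F := by
  have hcomp : (unitsAbs p K).comp (unitsAlgebraMap F K) = unitsAbs p F :=
    MonoidHom.ext fun x => by rw [MonoidHom.comp_apply, unitsAbs_unitsAlgebraMap]
  rw [MonoidHom.map_range, hcomp, valueGroup]

variable (F K)

lemma valueGroup_le : valueGroup p F ≤ valueGroup p K :=
  map_range_unitsAlgebraMap p (F := F) (K := K) ▸ Subgroup.map_le_range _ _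

lemma ramificationIndex_eq_index :
    ramificationIndex p F K = ((unitsAlgebraMap F K).range ⊔ unitGroup p K).index := by
  rw [ramificationIndex, ← map_range_unitsAlgebraMap p (F := F) (K := K), valueGroup,
    MonoidHom.range_eq_map (unitsAbs p K), Subgroup.relIndex_map_map, top_sup_eq,
    Subgroup.relIndex_top_right, unitGroup]

lemma ramificationIndex_mul (M : Type*) [Field M] [Algebra ℚ_[p] M] [Algebra.IsAlgebraic ℚ_[p] M]
    [Algebra K M] [IsScalarTower ℚ_[p] K M] :
    ramificationIndex p F K * ramificationIndex p K M = ramificationIndex p F M :=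
  Subgroup.relIndex_mul_relIndex _ _ _ (valueGroup_le p F K) (valueGroup_le p K M)

variable {F K p}

omit [Algebra F K] [IsScalarTower ℚ_[p] F K] in
lemma IsUniformizer.ramificationIndex_dvd {π : Kˣ} (hπ : IsUniformizer p π) {n : ℕ}
    (hn : unitsAbs p K π ^ n ∈ valueGroup p F) : ramificationIndex p F K ∣ n := by
  rw [ramificationIndex, hπ.valueGroup_eq]
  exact relIndex_zpowers_dvd_of_pow_mem hn

variable [FiniteDimensional F K] [IsGalois F K]

@[simp] lemma unitsAbs_unitsNorm (x : Kˣ) :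
    unitsAbs p F (unitsNorm F K x) = unitsAbs p K x ^ Module.finrank F K :=
  Units.ext (absVal_norm p (x : K))

lemma unitsNorm_mem_unitGroup {x : Kˣ} : unitsNorm F K x ∈ unitGroup p F ↔ x ∈ unitGroup p K := by
  rw [mem_unitGroup, mem_unitGroup, ← coe_unitsAbs, unitsAbs_unitsNorm, Units.val_pow_eq_pow_val,
    coe_unitsAbs, pow_eq_one_iff_of_nonneg (apply_nonneg _ _) Module.finrank_pos.ne']

lemma ramificationIndex_dvd_finrank [FiniteDimensional ℚ_[p] K] :
    ramificationIndex p F K ∣ Module.finrank F K := by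
  obtain ⟨π, hπ⟩ := exists_isUniformizer (p := p) K
  refine hπ.ramificationIndex_dvd ?_
  rw [← unitsAbs_unitsNorm (F := F)]
  exact unitsAbs_mem_valueGroup p _

lemma ramificationIndex_pos [FiniteDimensional ℚ_[p] K] : 0 < ramificationIndex p F K :=
  Nat.pos_of_dvd_of_pos ramificationIndex_dvd_finrank Module.finrank_pos

end RamificationIndex

section Approximation

variable {G G' : Type*} [CommGroup G] [CommGroup G']

lemma inf_le_map_of_approx {U : ℕ → Subgroup G} {V : ℕ → Subgroup G'} {S : Subgroup G'}
    (h : G →* G')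
    (hU : ∀ b : ℕ → G, (∀ n, b n ∈ U n) → ∃ l, ∀ n, l / ∏ i ∈ Finset.range n, b i ∈ U n)
    (hV : ⨅ n, V n = ⊥) (hUV : ∀ n, (U n).map h ≤ V n) (hS : h.range ≤ S)
    (step : ∀ n, ∀ a ∈ S ⊓ V n, ∃ b ∈ U n, a / h b ∈ V (n + 1)) : S ⊓ V 0 ≤ (U 0).map h := by
  intro a ha
  choose B hBU hBV using step
  let A : (n : ℕ) → ↥(S ⊓ V n) := fun n => Nat.rec ⟨a, ha⟩ (fun n x =>
    ⟨x / h (B n x.1 x.2), S.div_mem x.2.1 (hS ⟨_, rfl⟩), hBV n x x.2⟩) n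
  let b : ℕ → G := fun n => B n (A n).1 (A n).2
  have hA (n : ℕ) : (A n).1 * h (∏ i ∈ Finset.range n, b i) = a := by
    induction n with
    | zero => simp [A]
    | succ n ih =>
      have hsucc : (A (n + 1)).1 = (A n).1 / h (b n) := rfl
      rw [hsucc, Finset.prod_range_succ, map_mul, mul_comm (h _), ← mul_assoc, div_mul_cancel, ih]
  obtain ⟨l, hl⟩ := hU b fun n => hBU n _ _
  have hal (n : ℕ) : a / h l ∈ V n := by
    have hsplit : a / h l = (A n).1 / h (l / ∏ i ∈ Finset.range n, b i) := by
      rw [map_div, div_div_eq_mul_div, hA n]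
    rw [hsplit]
    exact (V n).div_mem (A n).2.2 (hUV n ⟨_, hl n, rfl⟩)
  have hone : a / h l ∈ ⨅ n, V n := Subgroup.mem_iInf.2 hal
  rw [hV, Subgroup.mem_bot, div_eq_one] at hone
  exact ⟨l, by simpa using hl 0, hone.symm⟩

end Approximation

section UnitFiltration

variable {k : Type*} [NontriviallyNormedField k] {K : Type*} [Field K] [Algebra k K]
  {w : AlgebraNorm k K}

lemma exists_unit_eq_one_add {y : K} (hy : w y < 1) : ∃ b : Kˣ, (b : K) = 1 + y := by
  refine ⟨Units.mk0 (1 + y) fun h => ?_, rfl⟩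
  rw [eq_neg_of_add_eq_zero_right h, map_neg_eq_map] at hy
  have hone := map_pos_of_ne_zero w (one_ne_zero (α := K))
  have hmul := map_mul_le_mul w (1 : K) 1
  rw [mul_one] at hmul
  nlinarith

lemma norm_mul_le_of_norm_sub_one_le (hw : IsNonarchimedean w) {x b : K} {c : ℝ} (hx : w x ≤ c)
    (hb : w (b - 1) ≤ 1) : w (x * b) ≤ c := by
  have hsplit : x * b = x + x * (b - 1) := by ring
  rw [hsplit]
  exact (hw _ _).trans (max_le hx ((map_mul_le_mul w _ _).trans
    ((mul_le_of_le_one_right (apply_nonneg w x) hb).trans hx)))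

lemma norm_inv_sub_one_le (hw : IsNonarchimedean w) {b : K} {r : ℝ} (hr : r < 1)
    (hb : w (b - 1) ≤ r) : w (b⁻¹ - 1) ≤ r := by
  obtain ⟨u, hu⟩ := exists_unit_eq_one_add (hb.trans_lt hr)
  have hb0 : b ≠ 0 := by simpa [hu] using u.ne_zero
  have hsplit : b⁻¹ - 1 = -(b - 1) + -((b - 1) * (b⁻¹ - 1)) := by field_simp; ring
  have hmax : w (b⁻¹ - 1) ≤ max (w (b - 1)) (w (b - 1) * w (b⁻¹ - 1)) := by
    conv_lhs => rw [hsplit]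
    refine (hw _ _).trans ?_
    rw [map_neg_eq_map, map_neg_eq_map]
    exact max_le_max le_rfl (map_mul_le_mul w _ _)
  rcases le_max_iff.1 hmax with h | h
  · exact h.trans hb
  · have := apply_nonneg w (b⁻¹ - 1)
    have := apply_nonneg w (b - 1)
    nlinarith

lemma norm_div_sub_one_le (hw : IsNonarchimedean w) {a b : K} {s : ℝ} (hb : w (b - 1) < 1)
    (hab : w (a - b) ≤ s) : w (a / b - 1) ≤ s := by
  obtain ⟨u, hu⟩ := exists_unit_eq_one_add hb
  have hb0 : b ≠ 0 := by simpa [hu] using u.ne_zero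
  have hsplit : a / b - 1 = (a - b) * b⁻¹ := by field_simp
  rw [hsplit]
  exact norm_mul_le_of_norm_sub_one_le hw hab ((norm_inv_sub_one_le hw hb le_rfl).trans hb.le)

lemma norm_mul_sub_one_le (hw : IsNonarchimedean w) {a b : K} {r : ℝ} (hr : r ≤ 1)
    (ha : w (a - 1) ≤ r) (hb : w (b - 1) ≤ r) : w (a * b - 1) ≤ r := by
  have hsplit : a * b - 1 = (a - 1) * b + (b - 1) := by ring
  rw [hsplit]
  exact (hw _ _).trans
    (max_le (norm_mul_le_of_norm_sub_one_le hw ha (hb.trans hr)) hb)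

lemma norm_prod_one_add_sub_sum_le (hw : IsNonarchimedean w) {ι : Type*} (s : Finset ι) (f : ι → K)
    {r : ℝ} (hr0 : 0 ≤ r) (hr1 : r ≤ 1) (h : ∀ i ∈ s, w (f i) ≤ r) :
    w (∏ i ∈ s, (1 + f i) - 1 - ∑ i ∈ s, f i) ≤ r * r ∧ w (∏ i ∈ s, (1 + f i) - 1) ≤ r := by
  classical
  induction s using Finset.induction_on with
  | empty => simp [hr0, mul_self_nonneg]
  | insert a s ha ih =>
    obtain ⟨hdiff, hprod⟩ := ih fun i hi => h i (Finset.mem_insert_of_mem hi)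
    have hfa := h a (Finset.mem_insert_self a s)
    rw [Finset.prod_insert ha, Finset.sum_insert ha]
    constructor
    · have hsplit : (1 + f a) * ∏ i ∈ s, (1 + f i) - 1 - (f a + ∑ i ∈ s, f i) =
          (∏ i ∈ s, (1 + f i) - 1 - ∑ i ∈ s, f i) + f a * (∏ i ∈ s, (1 + f i) - 1) := by ring
      rw [hsplit]
      exact (hw _ _).trans (max_le hdiff ((map_mul_le_mul w _ _).trans
        (mul_le_mul hfa hprod (apply_nonneg w _) hr0)))
    · exact norm_mul_sub_one_le hw hr1 (by rwa [add_sub_cancel_left]) hprod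

/-- The decreasing filtration of `Kˣ` by the groups of units `u` with `w (u - 1) ≤ ρ ^ (n + 1)`,
for a nonarchimedean norm `w` and `0 < ρ < 1`. For `w` the absolute value and `ρ` its value at a
uniformizer this is the filtration by higher unit groups. -/
def unitFiltration (hw : IsNonarchimedean w) {ρ : ℝ} (hρ : ρ ∈ Set.Ioo 0 1) (n : ℕ) :
    Subgroup Kˣ where
  carrier := {u | w (u - 1) ≤ ρ ^ (n + 1)}
  one_mem' := by simpa using pow_nonneg hρ.1.le _
  mul_mem' ha hb := norm_mul_sub_one_le hw (pow_le_one₀ hρ.1.le hρ.2.le) ha hb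
  inv_mem' {a} ha := by
    rw [Set.mem_ofPred_eq, Units.val_inv_eq_inv_val]
    exact norm_inv_sub_one_le hw (pow_lt_one₀ hρ.1.le hρ.2 n.succ_ne_zero) ha

variable (hw : IsNonarchimedean w) {ρ : ℝ} (hρ : ρ ∈ Set.Ioo 0 1)

lemma mem_unitFiltration {n : ℕ} {u : Kˣ} :
    u ∈ unitFiltration hw hρ n ↔ w (u - 1) ≤ ρ ^ (n + 1) := Iff.rfl

lemma unitFiltration_antitone : Antitone (unitFiltration hw hρ) := fun _ _ hmn _ hu =>
  hu.trans (pow_le_pow_of_le_one hρ.1.le hρ.2.le (Nat.succ_le_succ hmn))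

lemma norm_sub_one_lt_of_mem_unitFiltration {n : ℕ} {u : Kˣ} (hu : u ∈ unitFiltration hw hρ n) :
    w (u - 1) < 1 :=
  lt_of_le_of_lt hu (pow_lt_one₀ hρ.1.le hρ.2 n.succ_ne_zero)

lemma div_mem_unitFiltration {n : ℕ} {a b : Kˣ} (hb : b ∈ unitFiltration hw hρ 0)
    (hab : w (a - b : K) ≤ ρ ^ (n + 1)) : a / b ∈ unitFiltration hw hρ n := by
  rw [mem_unitFiltration, Units.val_div_eq_div_val]
  exact norm_div_sub_one_le hw (norm_sub_one_lt_of_mem_unitFiltration hw hρ hb) hab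

lemma iInf_unitFiltration : ⨅ n, unitFiltration hw hρ n = ⊥ := by
  refine eq_bot_iff.2 fun u hu => ?_
  have hlim := (tendsto_pow_atTop_nhds_zero_of_lt_one hρ.1.le hρ.2).comp
    (Filter.tendsto_add_atTop_nat 1)
  have hzero : w (u - 1) ≤ 0 := ge_of_tendsto' hlim fun n => Subgroup.mem_iInf.1 hu n
  have hsub : (u : K) - 1 = 0 := by
    by_contra hne
    exact (map_pos_of_ne_zero w hne).not_ge hzero
  exact Subgroup.mem_bot.2 (Units.ext (sub_eq_zero.1 hsub))

lemma exists_div_prod_mem_unitFiltration [CompleteSpace k] [FiniteDimensional k K] (b : ℕ → Kˣ)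
    (hb : ∀ n, b n ∈ unitFiltration hw hρ n) :
    ∃ l, ∀ n, l / ∏ i ∈ Finset.range n, b i ∈ unitFiltration hw hρ n := by
  let P : ℕ → Kˣ := fun n => ∏ i ∈ Finset.range n, b i
  have hP (n : ℕ) : P n ∈ unitFiltration hw hρ 0 := Subgroup.prod_mem _ fun i _ =>
    unitFiltration_antitone hw hρ i.zero_le (hb i)
  obtain ⟨l, hl⟩ := exists_norm_sub_le_of_geometric hw (a := fun n => (P n : K)) hρ.1.le hρ.2
    (C := ρ) fun n => by
      have hsplit : (P (n + 1) : K) - P n = (b n - 1) * P n := by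
        rw [show P (n + 1) = P n * b n from Finset.prod_range_succ _ _, Units.val_mul]
        ring
      rw [hsplit, ← pow_succ']
      exact norm_mul_le_of_norm_sub_one_le hw (hb n)
        (norm_sub_one_lt_of_mem_unitFiltration hw hρ (hP n)).le
  obtain ⟨u, hu⟩ := exists_unit_eq_one_add (w := w) (y := l - 1)
    (lt_of_le_of_lt (by simpa [P] using hl 0) hρ.2)
  refine ⟨u, fun n => div_mem_unitFiltration hw hρ (hP n) ?_⟩
  rw [hu, add_sub_cancel, pow_succ']
  exact hl n

end UnitFiltration

section UnitFiltrationPadic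

variable {p : ℕ} [Fact p.Prime] {K : Type*} [Field K] [Algebra ℚ_[p] K] [FiniteDimensional ℚ_[p] K]
  {w : AlgebraNorm ℚ_[p] K}

lemma absVal_lt_one_of_norm_lt_one {x : K} (hx : w x < 1) : absVal p K x < 1 := by
  obtain ⟨D, hD, hle⟩ := exists_norm_le_mul_norm w (absVal p K).toAlgebraNorm LinearMap.id
  by_contra! hge
  have hbound (n : ℕ) : 1 ≤ D * w x ^ (n + 1) := calc
    1 ≤ absVal p K x ^ (n + 1) := one_le_pow₀ hge
    _ = absVal p K (x ^ (n + 1)) := (map_pow _ _ _).symm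
    _ ≤ D * w (x ^ (n + 1)) := hle _
    _ ≤ D * w x ^ (n + 1) :=
      mul_le_mul_of_nonneg_left (map_pow_le_pow w x n.succ_ne_zero) hD
  have hlim := ((tendsto_pow_atTop_nhds_zero_of_lt_one (apply_nonneg w x) hx).comp
    (Filter.tendsto_add_atTop_nat 1)).const_mul D
  rw [mul_zero] at hlim
  exact zero_lt_one.not_ge (ge_of_tendsto' hlim hbound)

lemma absVal_eq_one_of_absVal_sub_one_lt {u : K} (hu : absVal p K (u - 1) < 1) :
    absVal p K u = 1 := by
  rw [← map_one (absVal p K)] at hu ⊢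
  exact absVal_eq_of_sub_lt p hu

variable (hw : IsNonarchimedean w) {ρ : ℝ} (hρ : ρ ∈ Set.Ioo 0 1)

lemma unitFiltration_le_unitGroup (n : ℕ) : unitFiltration hw hρ n ≤ unitGroup p K := fun _ hu =>
  (mem_unitGroup p).2 (absVal_eq_one_of_absVal_sub_one_lt
    (absVal_lt_one_of_norm_lt_one (norm_sub_one_lt_of_mem_unitFiltration hw hρ hu)))

lemma relIndex_ne_zero_of_finite_cover {G X : Type*} [Group G] {V U : Subgroup G} {S : Set X}
    (hS : S.Finite) (R : G → X → Prop) (hcover : ∀ u ∈ U, ∃ s ∈ S, R u s)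
    (hclose : ∀ u ∈ U, ∀ v ∈ U, ∀ s, R u s → R v s → u⁻¹ * v ∈ V) : V.relIndex U ≠ 0 := by
  have : Finite S := hS
  choose s hs hR using fun u : U => hcover u u.2
  have : Finite (U ⧸ V.subgroupOf U) := by
    refine Finite.of_injective (fun q => (⟨s q.out, hs _⟩ : S)) fun q q' hq => ?_
    have hq' : s q.out = s q'.out := congrArg Subtype.val hq
    rw [← q.out_eq', ← q'.out_eq', QuotientGroup.eq, Subgroup.mem_subgroupOf]
    exact hclose _ q.out.2 _ q'.out.2 _ (hR q.out) (hq' ▸ hR q'.out)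
  exact Subgroup.index_ne_zero_of_finite

lemma relIndex_unitFiltration_ne_zero (n : ℕ) :
    (unitFiltration hw hρ n).relIndex (unitGroup p K) ≠ 0 := by
  obtain ⟨D, hD, hle⟩ := exists_norm_le_mul_norm (absVal p K).toAlgebraNorm w LinearMap.id
  have hpow := pow_pos hρ.1 (n + 1)
  obtain ⟨S, hS, hcover⟩ := exists_finite_cover (absVal p K).toAlgebraNorm
    (show 0 < ρ ^ (n + 1) / (D + 1) by positivity)
  refine relIndex_ne_zero_of_finite_cover hS
    (fun u s => absVal p K ((u : K) - s) < ρ ^ (n + 1) / (D + 1))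
    (fun u hu => hcover u ((mem_unitGroup p).1 hu).le) fun u hu v _ s hus hvs => ?_
  have hsplit : ((u⁻¹ * v : Kˣ) : K) - 1 = ((v : K) - s - (u - s)) / u := by
    rw [Units.val_mul, Units.val_inv_eq_inv_val]
    field_simp
    ring
  have hclose : absVal p K ((u⁻¹ * v : Kˣ) - 1) ≤ ρ ^ (n + 1) / (D + 1) := by
    rw [hsplit, map_div₀, (mem_unitGroup p).1 hu, div_one]
    exact (absVal_sub_le_max p _ _).trans (max_le hvs.le hus.le)
  calc w ((u⁻¹ * v : Kˣ) - 1) ≤ D * absVal p K ((u⁻¹ * v : Kˣ) - 1) := hle _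
    _ ≤ (D + 1) * (ρ ^ (n + 1) / (D + 1)) := by gcongr; linarith
    _ = ρ ^ (n + 1) := by field_simp

end UnitFiltrationPadic

section Herbrand

variable {G G' : Type*} [CommGroup G] [CommGroup G']

lemma relIndex_eq_map_mul_inf_ker (f : G →* G') {V U : Subgroup G} (h : V ≤ U) :
    V.relIndex U = (V.map f).relIndex (U.map f) * (V ⊓ f.ker).relIndex (U ⊓ f.ker) := by
  rw [Subgroup.relIndex_map_map, ← Subgroup.relIndex_mul_relIndex V (V ⊔ U ⊓ f.ker) U le_sup_left
    (sup_le h inf_le_left), mul_comm]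
  congr 1
  · have hsup : U ⊔ f.ker = (V ⊔ f.ker) ⊔ U := by
      rw [sup_comm V, sup_assoc, sup_eq_right.2 h, sup_comm]
    rw [hsup, Subgroup.relIndex_sup_left, ← Subgroup.inf_relIndex_right (V ⊔ f.ker) U, inf_comm U,
      sup_inf_assoc_of_le _ h]
  · rw [Subgroup.relIndex_sup_left, ← Subgroup.inf_relIndex_right V (U ⊓ f.ker), ← inf_assoc,
      inf_eq_left.2 h]

-- The Herbrand quotient of `U` is trivial if that of a subgroup of finite index is.
lemma relIndex_map_inf_ker_eq_of_relIndex_ne_zero {f g : G →* G} (hfg : ∀ x, f (g x) = 1)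
    (hgf : ∀ x, g (f x) = 1) {V U : Subgroup G} (h : V ≤ U) (hUf : U.map f ≤ U) (hUg : U.map g ≤ U)
    (hVf : V ⊓ f.ker = V.map g) (hVg : V ⊓ g.ker = V.map f) (h0 : V.relIndex U ≠ 0) :
    (U.map f).relIndex (U ⊓ g.ker) = (U.map g).relIndex (U ⊓ f.ker) := by
  have hf := relIndex_eq_map_mul_inf_ker f h
  have hg := relIndex_eq_map_mul_inf_ker g h
  have hUf' : U.map f ≤ U ⊓ g.ker := le_inf hUf (Subgroup.map_le_iff_le_comap.2 fun x _ => hgf x)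
  have hUg' : U.map g ≤ U ⊓ f.ker := le_inf hUg (Subgroup.map_le_iff_le_comap.2 fun x _ => hfg x)
  rw [hVf, ← Subgroup.relIndex_mul_relIndex _ _ _ (Subgroup.map_mono h) hUg'] at hf
  rw [hVg, ← Subgroup.relIndex_mul_relIndex _ _ _ (Subgroup.map_mono h) hUf'] at hg
  rw [hf] at h0 hg
  have hVf0 := left_ne_zero_of_mul h0
  have hVg0 := left_ne_zero_of_mul (right_ne_zero_of_mul h0)
  refine Nat.eq_of_mul_eq_mul_left (Nat.pos_of_ne_zero (mul_ne_zero hVf0 hVg0)) ?_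
  rw [mul_assoc, mul_assoc, hg]
  ring

end Herbrand

section Cyclic

variable {G : Type*} [Group G] [Fintype G] {σ : G}

lemma prod_range_orderOf_pow {M : Type*} [CommMonoid M] (hσ : ∀ g, g ∈ Subgroup.zpowers σ)
    (c : G → M) : ∏ j ∈ Finset.range (orderOf σ), c (σ ^ j) = ∏ g, c g := by
  classical
  rw [← IsCyclic.image_range_orderOf hσ, Finset.prod_image]
  intro i hi j hj hij
  exact pow_injOn_Iio_orderOf (Finset.mem_range.1 hi) (Finset.mem_range.1 hj) hij

lemma sum_range_orderOf_pow {M : Type*} [AddCommMonoid M] (hσ : ∀ g, g ∈ Subgroup.zpowers σ)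
    (c : G → M) : ∑ j ∈ Finset.range (orderOf σ), c (σ ^ j) = ∑ g, c g :=
  prod_range_orderOf_pow (M := Multiplicative M) hσ c

lemma exists_sum_range_sub_eq {M : Type*} [AddCommGroup M] (hσ : ∀ g, g ∈ Subgroup.zpowers σ)
    {c : G → M} (hc : ∑ g, c g = 0) : ∃ m : G → ℕ, ∀ g,
      ∑ j ∈ Finset.range (m g), c (σ ^ j) - ∑ j ∈ Finset.range (m (σ⁻¹ * g)), c (σ ^ j) = c g := by
  let D : ℕ → M := fun n => ∑ j ∈ Finset.range n, c (σ ^ j)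
  have hperiodic : Function.Periodic D (orderOf σ) := fun n => by
    simp only [D, add_comm n, Finset.sum_range_add, sum_range_orderOf_pow hσ, hc, pow_add,
      pow_orderOf_eq_one, one_mul, zero_add]
  have hpow (g : G) : ∃ i : ℕ, σ ^ i = g := mem_powers_iff_mem_zpowers.2 (hσ g)
  choose i hi using hpow
  refine ⟨fun g => i g + 1, fun g => ?_⟩
  have hmod : i g ≡ i (σ⁻¹ * g) + 1 [MOD orderOf σ] := by
    rw [← pow_eq_pow_iff_modEq, pow_succ', hi, hi, mul_inv_cancel_left]
  have hD : D (i (σ⁻¹ * g) + 1) = D (i g) := by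
    rw [← hperiodic.map_mod_nat, ← hmod, hperiodic.map_mod_nat]
  change D (i g + 1) - D (i (σ⁻¹ * g) + 1) = c g
  rw [hD, ← congrArg c (hi g)]
  exact sub_eq_of_eq_add' (Finset.sum_range_succ _ _)

end Cyclic

section NormalBasis

open IsGalois

variable {F K : Type*} [Field F] [Field K] [Algebra F K] [FiniteDimensional F K] [IsGalois F K]

lemma normalBasis_repr_algEquiv (g h : Gal(K/F)) (x : K) :
    (normalBasis F K).repr (g x) h = (normalBasis F K).repr x (g⁻¹ * h) := by
  classical
  suffices ((normalBasis F K).coord h).comp g.toLinearMap = (normalBasis F K).coord (g⁻¹ * h) from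
    LinearMap.congr_fun this x
  refine (normalBasis F K).ext fun i => ?_
  have hgi : g (normalBasis F K i) = normalBasis F K (g * i) := by
    rw [normalBasis_apply i, normalBasis_apply (g * i), AlgEquiv.mul_apply]
  simp [hgi, Finsupp.single_apply, eq_inv_mul_iff_mul_eq]

lemma normalBasis_repr_trace (h : Gal(K/F)) (x : K) :
    (normalBasis F K).repr (∑ g : Gal(K/F), g x) h = ∑ g, (normalBasis F K).repr x g := by
  rw [map_sum, Finsupp.finsetSum_apply]
  simp_rw [normalBasis_repr_algEquiv]
  exact Fintype.sum_equiv ((Equiv.inv _).trans (Equiv.mulRight h)) _ _ fun g => rfl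

variable (p : ℕ) [Fact p.Prime] [Algebra ℚ_[p] F] [FiniteDimensional ℚ_[p] F]

variable (F) in
/-- The maximum of the absolute values of the coordinates with respect to a normal basis. -/
noncomputable def normalBasisSup (x : K) : ℝ :=
  Finset.univ.sup' Finset.univ_nonempty fun g => absVal p F ((normalBasis F K).repr x g)

lemma normalBasisSup_le_iff {x : K} {c : ℝ} :
    normalBasisSup F p x ≤ c ↔ ∀ g, absVal p F ((normalBasis F K).repr x g) ≤ c := by
  simp [normalBasisSup]

lemma absVal_repr_le (x : K) (g : Gal(K/F)) :
    absVal p F ((normalBasis F K).repr x g) ≤ normalBasisSup F p x :=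
  (normalBasisSup_le_iff p).1 le_rfl g

variable (F) in
lemma normalBasisSup_nonneg (x : K) : 0 ≤ normalBasisSup F p x :=
  (apply_nonneg _ _).trans (absVal_repr_le p x 1)

variable (F K) in
lemma isNonarchimedean_normalBasisSup : IsNonarchimedean (normalBasisSup F p (K := K)) :=
  fun x y => by
    rw [normalBasisSup_le_iff]
    intro g
    rw [map_add, Finsupp.add_apply]
    exact (isNonarchimedean_absVal p _ _).trans
      (max_le_max (absVal_repr_le p x g) (absVal_repr_le p y g))

lemma normalBasisSup_smul (c : F) (x : K) :
    normalBasisSup F p (c • x) = absVal p F c * normalBasisSup F p x := by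
  simp only [normalBasisSup, map_smul, Finsupp.smul_apply, smul_eq_mul, map_mul]
  exact (Finset.mul₀_sup' (apply_nonneg _ _) _ _ _).symm

lemma normalBasisSup_algEquiv (g : Gal(K/F)) (x : K) :
    normalBasisSup F p (g x) = normalBasisSup F p x := by
  have hle (g : Gal(K/F)) (x : K) : normalBasisSup F p (g x) ≤ normalBasisSup F p x := by
    rw [normalBasisSup_le_iff]
    intro h
    rw [normalBasis_repr_algEquiv]
    exact absVal_repr_le p x _
  refine (hle g x).antisymm ?_
  have hinv := hle g⁻¹ (g x)
  rwa [← AlgEquiv.mul_apply, inv_mul_cancel, AlgEquiv.one_apply] at hinv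

lemma normalBasisSup_smul_normalBasis_one (c : F) :
    normalBasisSup F p (c • normalBasis F K 1) = absVal p F c := by
  classical
  refine le_antisymm ((normalBasisSup_le_iff p).2 fun g => ?_) ?_
  · rw [map_smul, Module.Basis.repr_self, Finsupp.smul_apply, Finsupp.single_apply]
    split_ifs <;> simp
  · have hrepr := absVal_repr_le (F := F) p (c • normalBasis F K 1) 1
    rwa [map_smul, Module.Basis.repr_self, Finsupp.smul_apply, Finsupp.single_eq_same, smul_eq_mul,
      mul_one] at hrepr

lemma normalBasisSup_eq_zero {x : K} (hx : normalBasisSup F p x = 0) : x = 0 := by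
  refine (normalBasis F K).ext_elem fun g => ?_
  have hzero := (absVal_repr_le p x g).trans_eq hx
  rw [map_zero, Finsupp.zero_apply]
  by_contra hne
  exact (absVal_pos p hne).not_ge hzero

variable (F K) in
lemma exists_normalBasisSup_mul_le : ∃ B, 0 < B ∧ ∀ x y : K,
    normalBasisSup F p (x * y) ≤ B * (normalBasisSup F p x * normalBasisSup F p y) := by
  obtain ⟨B, hB⟩ := Finite.exists_le fun i : Gal(K/F) × Gal(K/F) =>
    normalBasisSup F p (normalBasis F K i.1 * normalBasis F K i.2)
  have hB0 : 0 < max B 1 := lt_max_of_lt_right one_pos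
  refine ⟨max B 1, hB0, fun x y => ?_⟩
  have hx := normalBasisSup_nonneg F p x
  have hy := normalBasisSup_nonneg F p y
  rw [normalBasisSup_le_iff]
  intro k
  have hmul : x * y = ∑ g, ∑ h, ((normalBasis F K).repr x g * (normalBasis F K).repr y h) •
      (normalBasis F K g * normalBasis F K h) := by
    conv_lhs => rw [← (normalBasis F K).sum_repr x, ← (normalBasis F K).sum_repr y,
      Finset.sum_mul_sum]
    simp_rw [smul_mul_smul_comm]
  rw [hmul]
  simp only [map_sum, map_smul, Finsupp.finsetSum_apply, Finsupp.smul_apply, smul_eq_mul]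
  refine sum_le_of_isNonarchimedean (isNonarchimedean_absVal p) (by positivity) fun g _ =>
    sum_le_of_isNonarchimedean (isNonarchimedean_absVal p) (by positivity) fun h _ => ?_
  rw [map_mul, map_mul, mul_comm]
  have hbound := (absVal_repr_le p (normalBasis F K g * normalBasis F K h) k).trans
    ((hB (g, h)).trans (le_max_left B 1))
  gcongr
  exacts [absVal_repr_le p x g, absVal_repr_le p y h]

lemma exists_normalBasisSup_le_of_fixed {x : K} (hx : ∀ g : Gal(K/F), g x = x) :
    ∃ y, normalBasisSup F p y ≤ normalBasisSup F p x ∧ ∑ g : Gal(K/F), g y = x := by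
  have hconst (g : Gal(K/F)) : (normalBasis F K).repr x g = (normalBasis F K).repr x 1 := by
    simpa [hx] using normalBasis_repr_algEquiv g g x
  refine ⟨(normalBasis F K).repr x 1 • normalBasis F K 1, ?_, ?_⟩
  · rw [normalBasisSup_smul_normalBasis_one]
    exact absVal_repr_le p x 1
  · conv_rhs => rw [← (normalBasis F K).sum_repr x]
    refine Finset.sum_congr rfl fun g _ => ?_
    rw [map_smul, hconst g, ← normalBasis_apply]

lemma exists_normalBasisSup_le_of_zpowers {σ : Gal(K/F)} (hσ : ∀ g, g ∈ Subgroup.zpowers σ)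
    (x : K) : ∃ y t, normalBasisSup F p y ≤ normalBasisSup F p x ∧
      normalBasisSup F p t ≤ normalBasisSup F p (∑ g : Gal(K/F), g x) ∧ x = t + (σ y - y) := by
  set b := normalBasis F K
  set s := ∑ g, b.repr x g
  have hs : absVal p F s ≤ normalBasisSup F p x := sum_le_of_isNonarchimedean
    (isNonarchimedean_absVal p) (normalBasisSup_nonneg F p x) fun g _ => absVal_repr_le p x g
  have hsum : ∑ g, b.repr (x - s • b 1) g = 0 := by
    classical
    simp [s, Finset.sum_sub_distrib, Finsupp.single_apply]
  obtain ⟨m, hm⟩ := exists_sum_range_sub_eq hσ hsum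
  let d : Gal(K/F) → F := fun g => -∑ j ∈ Finset.range (m g), b.repr (x - s • b 1) (σ ^ j)
  have hrepr (g : Gal(K/F)) : b.repr (b.equivFun.symm d) g = d g :=
    congrFun (b.equivFun.apply_symm_apply d) g
  have hle : normalBasisSup F p (x - s • b 1) ≤ normalBasisSup F p x := by
    rw [sub_eq_add_neg, ← neg_smul]
    refine (isNonarchimedean_normalBasisSup F K p _ _).trans (max_le le_rfl ?_)
    rwa [normalBasisSup_smul_normalBasis_one, map_neg_eq_map]
  refine ⟨b.equivFun.symm d, s • b 1, ?_, ?_, ?_⟩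
  · rw [normalBasisSup_le_iff]
    intro g
    rw [hrepr, map_neg_eq_map]
    exact sum_le_of_isNonarchimedean (isNonarchimedean_absVal p) (normalBasisSup_nonneg F p x)
      fun j _ => (absVal_repr_le p _ _).trans hle
  · have htrace : b.repr (∑ g : Gal(K/F), g x) 1 = s := normalBasis_repr_trace 1 x
    rw [normalBasisSup_smul_normalBasis_one, ← htrace]
    exact absVal_repr_le p _ 1
  · rw [← sub_eq_iff_eq_add']
    refine b.ext_elem fun g => ?_
    rw [map_sub b.repr (σ _), Finsupp.sub_apply, normalBasis_repr_algEquiv, hrepr, hrepr, ← hm g]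
    ring

end NormalBasis

section GaloisAdapted

variable {p : ℕ} [Fact p.Prime] (F : Type*) [Field F] {K : Type*} [Field K] [Algebra ℚ_[p] K]
  [Algebra F K] [FiniteDimensional F K]

/-- A norm on a Galois extension `K/F` is Galois-adapted if it is nonarchimedean, Galois invariant,
and if `K` behaves for it like an induced Galois module: Galois-fixed elements are traces, and
elements of small trace are close to the image of `σ - 1` for every generator `σ` of the Galois
group, with norm control. -/
structure IsGaloisAdapted (w : AlgebraNorm ℚ_[p] K) : Prop where
  isNonarchimedean : IsNonarchimedean w
  apply_algEquiv : ∀ (g : Gal(K/F)) (x : K), w (g x) = w x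
  exists_sum_eq : ∀ x : K, (∀ g : Gal(K/F), g x = x) → ∃ y, w y ≤ w x ∧ ∑ g : Gal(K/F), g y = x
  exists_add_sub_eq : ∀ σ : Gal(K/F), (∀ g, g ∈ Subgroup.zpowers σ) → ∀ x, ∃ y t, w y ≤ w x ∧
    w t ≤ w (∑ g : Gal(K/F), g x) ∧ x = t + (σ y - y)

variable (p K) [IsGalois F K] [Algebra ℚ_[p] F] [FiniteDimensional ℚ_[p] F]
  [IsScalarTower ℚ_[p] F K]

lemma exists_isGaloisAdapted : ∃ w : AlgebraNorm ℚ_[p] K, IsGaloisAdapted F w := by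
  obtain ⟨B, hB0, hB⟩ := exists_normalBasisSup_mul_le F K p
  have hadd := isNonarchimedean_normalBasisSup F K p
  have hsmul (c : ℚ_[p]) (x : K) : normalBasisSup F p (c • x) = ‖c‖ * normalBasisSup F p x := by
    rw [← algebraMap_smul F c x, normalBasisSup_smul, Algebra.algebraMap_eq_smul_one,
      map_smul_eq_mul, map_one, mul_one]
  let w : AlgebraNorm ℚ_[p] K :=
    { toFun x := B * normalBasisSup F p x
      map_zero' := by simpa using Or.inr (hsmul 0 0)
      add_le' x y := by
        rw [← mul_add]
        exact mul_le_mul_of_nonneg_left ((hadd x y).trans (max_le_add_of_nonneg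
          (normalBasisSup_nonneg F p x) (normalBasisSup_nonneg F p y))) hB0.le
      neg' x := by simpa using Or.inl (hsmul (-1) x)
      mul_le' x y := by
        refine (mul_le_mul_of_nonneg_left (hB x y) hB0.le).trans_eq ?_
        ring
      eq_zero_of_map_eq_zero' x hx :=
        normalBasisSup_eq_zero p ((mul_eq_zero.1 hx).resolve_left hB0.ne')
      smul' c x := by rw [hsmul, mul_left_comm] }
  have hw {x y : K} : w x ≤ w y ↔ normalBasisSup F p x ≤ normalBasisSup F p y :=
    mul_le_mul_iff_right₀ hB0
  refine ⟨w, fun x y => ?_, fun g x => ?_, fun x hx => ?_, fun σ hσ x => ?_⟩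
  · exact (mul_le_mul_of_nonneg_left (hadd x y) hB0.le).trans_eq (mul_max_of_nonneg _ _ hB0.le)
  · exact congrArg (B * ·) (normalBasisSup_algEquiv p g x)
  · simpa only [hw] using exists_normalBasisSup_le_of_fixed p hx
  · simpa only [hw] using exists_normalBasisSup_le_of_zpowers p hσ x

end GaloisAdapted

section NormEnd

variable {F K : Type*} [Field F] [Field K] [Algebra F K]

/-- The endomorphism `u ↦ σ u / u` of `Kˣ`. -/
def smulDivEnd (σ : Gal(K/F)) : Kˣ →* Kˣ :=
  MulDistribMulAction.toMonoidHom Kˣ σ / MonoidHom.id Kˣ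

lemma smulDivEnd_apply (σ : Gal(K/F)) (u : Kˣ) : smulDivEnd σ u = σ • u / u := rfl

variable (F K) in
/-- The norm of `K/F` as an endomorphism of `Kˣ`. -/
noncomputable def normEnd : Kˣ →* Kˣ := (unitsAlgebraMap F K).comp (unitsNorm F K)

lemma ker_normEnd : (normEnd F K).ker = (unitsNorm F K).ker := by
  ext u
  exact map_eq_one_iff _ unitsAlgebraMap_injective

lemma normEnd_smulDivEnd (σ : Gal(K/F)) (u : Kˣ) : normEnd F K (smulDivEnd σ u) = 1 := by
  rw [← MonoidHom.mem_ker, ker_normEnd, MonoidHom.mem_ker, smulDivEnd_apply, map_div,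
    unitsNorm_smul, div_self']

variable [FiniteDimensional F K] [IsGalois F K] {σ : Gal(K/F)}

lemma coe_normEnd (u : Kˣ) : (normEnd F K u : K) = ∏ g : Gal(K/F), (1 + g ((u : K) - 1)) := by
  rw [normEnd, MonoidHom.comp_apply, unitsAlgebraMap_unitsNorm, Units.coe_prod]
  simp

lemma ker_smulDivEnd (hσ : ∀ g, g ∈ Subgroup.zpowers σ) :
    (smulDivEnd σ).ker = (unitsAlgebraMap F K).range := by
  ext u
  rw [mem_range_unitsAlgebraMap_iff, MonoidHom.mem_ker, smulDivEnd_apply, div_eq_one]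
  refine ⟨fun hu g => ?_, fun hu => hu σ⟩
  exact Subgroup.zpowers_le.2 (show σ ∈ MulAction.stabilizer Gal(K/F) u from hu) (hσ g)

lemma smulDivEnd_normEnd (hσ : ∀ g, g ∈ Subgroup.zpowers σ) (u : Kˣ) :
    smulDivEnd σ (normEnd F K u) = 1 := by
  rw [← MonoidHom.mem_ker, ker_smulDivEnd hσ]
  exact ⟨_, rfl⟩

lemma exists_smul_div_eq_of_unitsNorm_eq_one (hσ : ∀ g, g ∈ Subgroup.zpowers σ) {u : Kˣ}
    (hu : unitsNorm F K u = 1) : ∃ z : Kˣ, σ • z / z = u := by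
  let c : ℕ → Kˣ := fun n => ∏ j ∈ Finset.range n, σ ^ j • u
  have hcadd (n k : ℕ) : c (n + k) = σ ^ n • c k * c n := by
    simp only [c, Finset.prod_range_add, Finset.smul_prod', smul_smul, ← pow_add]
    exact mul_comm _ _
  have hperiodic : Function.Periodic c (orderOf σ) := fun n => by
    have hone : c (orderOf σ) = 1 := (prod_range_orderOf_pow hσ (· • u)).trans
      ((unitsAlgebraMap_unitsNorm u).symm.trans (by rw [hu, map_one]))
    rw [hcadd, hone, smul_one, one_mul]
  have hmod {i j : ℕ} (hij : i ≡ j [MOD orderOf σ]) : c i = c j := by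
    rw [← hperiodic.map_mod_nat i, hij, hperiodic.map_mod_nat]
  have hpow (g : Gal(K/F)) : ∃ i : ℕ, σ ^ i = g := mem_powers_iff_mem_zpowers.2 (hσ g)
  choose i hi using hpow
  obtain ⟨z, hz⟩ := groupCohomology.isMulCoboundary₁_of_isMulCocycle₁_of_aut_to_units
    (fun g => c (i g)) fun g h => by
      have hadd : i (g * h) ≡ i g + i h [MOD orderOf σ] := by
        rw [← pow_eq_pow_iff_modEq, pow_add, hi, hi, hi]
      simp only [hmod hadd, hcadd, hi]
  have hone : i σ ≡ 1 [MOD orderOf σ] := by rw [← pow_eq_pow_iff_modEq, hi, pow_one]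
  refine ⟨z, (hz σ).trans ((hmod hone).trans ?_)⟩
  simp only [c, Finset.prod_range_one, pow_zero, one_smul]

lemma ker_unitsNorm (hσ : ∀ g, g ∈ Subgroup.zpowers σ) :
    (unitsNorm F K).ker = (smulDivEnd σ).range := by
  refine le_antisymm (fun u hu => exists_smul_div_eq_of_unitsNorm_eq_one hσ hu) ?_
  rintro _ ⟨u, rfl⟩
  rw [← ker_normEnd]
  exact normEnd_smulDivEnd σ u

end NormEnd

section Exactness

lemma pow_mul_pow_le {ρ : ℝ} (hρ : ρ ∈ Set.Ioo 0 1) (n : ℕ) :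
    ρ ^ (n + 1) * ρ ^ (n + 1) ≤ ρ ^ (n + 1 + 1) := by
  rw [← pow_add]
  exact pow_le_pow_of_le_one hρ.1.le hρ.2.le (by omega)

variable {p : ℕ} [Fact p.Prime] {F K : Type*} [Field F] [Field K] [Algebra ℚ_[p] K]
  [Algebra F K] [FiniteDimensional F K]
  {w : AlgebraNorm ℚ_[p] K} (hw : IsGaloisAdapted F w) {ρ : ℝ} (hρ : ρ ∈ Set.Ioo 0 1)

include hw

lemma IsGaloisAdapted.apply_algEquiv_sub_one (g : Gal(K/F)) (x : K) :
    w (g x - 1) = w (x - 1) := by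
  rw [← map_one g, ← map_sub, hw.apply_algEquiv, map_one]

lemma map_smulDivEnd_unitFiltration_le (σ : Gal(K/F)) (n : ℕ) :
    (unitFiltration hw.isNonarchimedean hρ n).map (smulDivEnd σ) ≤
      unitFiltration hw.isNonarchimedean hρ n := by
  rintro _ ⟨u, hu, rfl⟩
  refine Subgroup.div_mem _ ?_ hu
  rw [mem_unitFiltration]
  exact (hw.apply_algEquiv_sub_one σ u).trans_le hu

variable [IsGalois F K]

lemma norm_normEnd_sub_one_sub_sum_le {n : ℕ} {u : Kˣ}
    (hu : u ∈ unitFiltration hw.isNonarchimedean hρ n) :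
    w (normEnd F K u - 1 - ∑ g : Gal(K/F), g ((u : K) - 1)) ≤ ρ ^ (n + 1 + 1) ∧
      normEnd F K u ∈ unitFiltration hw.isNonarchimedean hρ n := by
  have hprod := norm_prod_one_add_sub_sum_le hw.isNonarchimedean Finset.univ
    (fun g : Gal(K/F) => g ((u : K) - 1)) (pow_nonneg hρ.1.le (n + 1))
    (pow_le_one₀ hρ.1.le hρ.2.le) fun g _ => (hw.apply_algEquiv g _).trans_le hu
  rw [← coe_normEnd] at hprod
  exact ⟨hprod.1.trans (pow_mul_pow_le hρ n), hprod.2⟩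

lemma exists_div_smulDivEnd_mem {σ : Gal(K/F)} (hσ : ∀ g, g ∈ Subgroup.zpowers σ) {n : ℕ}
    {a : Kˣ} (haN : a ∈ (normEnd F K).ker) (ha : a ∈ unitFiltration hw.isNonarchimedean hρ n) :
    ∃ b ∈ unitFiltration hw.isNonarchimedean hρ n,
      a / smulDivEnd σ b ∈ unitFiltration hw.isNonarchimedean hρ (n + 1) := by
  obtain ⟨y, t, hy, ht, hyt⟩ := hw.exists_add_sub_eq σ hσ ((a : K) - 1)
  have htrace := (norm_normEnd_sub_one_sub_sum_le hw hρ ha).1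
  rw [MonoidHom.mem_ker.1 haN, Units.val_one, sub_self, zero_sub, map_neg_eq_map] at htrace
  obtain ⟨b, hb⟩ := exists_unit_eq_one_add (w := w)
    (hy.trans_lt (norm_sub_one_lt_of_mem_unitFiltration _ hρ ha))
  have hbn : b ∈ unitFiltration hw.isNonarchimedean hρ n := by
    rw [mem_unitFiltration, hb, add_sub_cancel_left]
    exact hy.trans ha
  refine ⟨b, hbn, ?_⟩
  rw [smulDivEnd_apply, div_div_eq_mul_div]
  refine div_mem_unitFiltration _ hρ ?_ ?_
  · rw [mem_unitFiltration]
    exact (hw.apply_algEquiv_sub_one σ b).trans_le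
      (unitFiltration_antitone _ hρ n.zero_le hbn)
  · have hsplit : ((a * b : Kˣ) : K) - (σ • b : Kˣ) = t + (a - 1) * y := by
      have hσb : ((σ • b : Kˣ) : K) = 1 + σ y := by
        rw [← map_one σ, ← map_add, ← hb]
        rfl
      rw [hσb, Units.val_mul, hb]
      linear_combination hyt
    rw [hsplit]
    exact (hw.isNonarchimedean _ _).trans (max_le (ht.trans htrace)
      ((map_mul_le_mul w _ _).trans ((mul_le_mul ha (hy.trans ha) (apply_nonneg w y)
        (pow_nonneg hρ.1.le _)).trans (pow_mul_pow_le hρ n))))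

lemma exists_div_normEnd_mem {n : ℕ} {a : Kˣ} (haF : a ∈ (unitsAlgebraMap F K).range)
    (ha : a ∈ unitFiltration hw.isNonarchimedean hρ n) :
    ∃ b ∈ unitFiltration hw.isNonarchimedean hρ n,
      a / normEnd F K b ∈ unitFiltration hw.isNonarchimedean hρ (n + 1) := by
  obtain ⟨y, hy, hya⟩ := hw.exists_sum_eq ((a : K) - 1) fun g => by
    rw [map_sub, map_one]
    exact congrArg (· - 1) (congrArg Units.val (mem_range_unitsAlgebraMap_iff.1 haF g))
  obtain ⟨b, hb⟩ := exists_unit_eq_one_add (w := w)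
    (hy.trans_lt (norm_sub_one_lt_of_mem_unitFiltration _ hρ ha))
  have hbn : b ∈ unitFiltration hw.isNonarchimedean hρ n := by
    rw [mem_unitFiltration, hb, add_sub_cancel_left]
    exact hy.trans ha
  obtain ⟨htrace, hNb⟩ := norm_normEnd_sub_one_sub_sum_le hw hρ hbn
  refine ⟨b, hbn, div_mem_unitFiltration _ hρ (unitFiltration_antitone _ hρ n.zero_le hNb) ?_⟩
  rw [hb, add_sub_cancel_left, hya, sub_sub_sub_cancel_right] at htrace
  rwa [map_sub_rev]

variable [FiniteDimensional ℚ_[p] K]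

lemma unitFiltration_inf_ker_normEnd {σ : Gal(K/F)} (hσ : ∀ g, g ∈ Subgroup.zpowers σ) :
    unitFiltration hw.isNonarchimedean hρ 0 ⊓ (normEnd F K).ker =
      (unitFiltration hw.isNonarchimedean hρ 0).map (smulDivEnd σ) := by
  refine le_antisymm ?_ (le_inf (map_smulDivEnd_unitFiltration_le hw hρ σ 0) ?_)
  · rw [inf_comm]
    refine inf_le_map_of_approx (smulDivEnd σ) (exists_div_prod_mem_unitFiltration _ hρ)
      (iInf_unitFiltration _ hρ) (map_smulDivEnd_unitFiltration_le hw hρ σ) ?_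
      fun n a ha => exists_div_smulDivEnd_mem hw hρ hσ ha.1 ha.2
    rintro _ ⟨u, rfl⟩
    exact normEnd_smulDivEnd σ u
  · rintro _ ⟨u, -, rfl⟩
    exact normEnd_smulDivEnd σ u

lemma unitFiltration_inf_ker_smulDivEnd {σ : Gal(K/F)} (hσ : ∀ g, g ∈ Subgroup.zpowers σ) :
    unitFiltration hw.isNonarchimedean hρ 0 ⊓ (smulDivEnd σ).ker =
      (unitFiltration hw.isNonarchimedean hρ 0).map (normEnd F K) := by
  have hmap (n : ℕ) : (unitFiltration hw.isNonarchimedean hρ n).map (normEnd F K) ≤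
      unitFiltration hw.isNonarchimedean hρ n := by
    rintro _ ⟨u, hu, rfl⟩
    exact (norm_normEnd_sub_one_sub_sum_le hw hρ hu).2
  have hrange : (normEnd F K).range ≤ (smulDivEnd σ).ker := by
    rintro _ ⟨u, rfl⟩
    exact smulDivEnd_normEnd hσ u
  refine le_antisymm ?_ (le_inf (hmap 0) ((Subgroup.map_le_range _ _).trans hrange))
  rw [inf_comm]
  refine inf_le_map_of_approx (normEnd F K) (exists_div_prod_mem_unitFiltration _ hρ)
    (iInf_unitFiltration _ hρ) hmap hrange fun n a ha =>
      exists_div_normEnd_mem hw hρ ?_ ha.2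
  rw [← ker_smulDivEnd hσ]
  exact ha.1

end Exactness

section CyclicIndex

variable {p : ℕ} [Fact p.Prime] {F K : Type*} [Field F] [Field K] [Algebra ℚ_[p] F]
  [Algebra ℚ_[p] K] [FiniteDimensional ℚ_[p] K] [Algebra F K] [IsScalarTower ℚ_[p] F K]

lemma smulDivEnd_mem_unitGroup (σ : Gal(K/F)) (u : Kˣ) : smulDivEnd σ u ∈ unitGroup p K := by
  rw [mem_unitGroup, smulDivEnd_apply, Units.val_div_eq_div_val, map_div₀]
  have hσu : absVal p K ((σ • u : Kˣ) : K) = absVal p K u := absVal_algEquiv p σ (u : K)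
  rw [hσu, div_self (absVal_pos p u.ne_zero).ne']

variable [FiniteDimensional ℚ_[p] F]

lemma unitGroup_inf_range_unitsAlgebraMap :
    unitGroup p K ⊓ (unitsAlgebraMap F K).range = (unitGroup p F).map (unitsAlgebraMap F K) := by
  ext u
  constructor
  · rintro ⟨hu, x, rfl⟩
    exact ⟨x, (unitsAlgebraMap_mem_unitGroup p).1 hu, rfl⟩
  · rintro ⟨x, hx, rfl⟩
    exact ⟨(unitsAlgebraMap_mem_unitGroup p).2 hx, x, rfl⟩

variable [FiniteDimensional F K] [IsGalois F K]

lemma unitGroup_inf_ker_smulDivEnd {σ : Gal(K/F)} (hσ : ∀ g, g ∈ Subgroup.zpowers σ) :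
    unitGroup p K ⊓ (smulDivEnd σ).ker = (unitGroup p F).map (unitsAlgebraMap F K) := by
  rw [ker_smulDivEnd hσ, unitGroup_inf_range_unitsAlgebraMap]

omit [FiniteDimensional ℚ_[p] F] in
lemma unitGroup_inf_ker_normEnd {σ : Gal(K/F)} (hσ : ∀ g, g ∈ Subgroup.zpowers σ) :
    unitGroup p K ⊓ (normEnd F K).ker = (⊤ : Subgroup Kˣ).map (smulDivEnd σ) := by
  rw [ker_normEnd, ker_unitsNorm hσ, ← MonoidHom.range_eq_map, inf_eq_right]
  rintro _ ⟨u, rfl⟩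
  exact smulDivEnd_mem_unitGroup σ u

lemma relIndex_map_smulDivEnd_unitGroup {σ : Gal(K/F)} (hσ : ∀ g, g ∈ Subgroup.zpowers σ) :
    ((unitGroup p K).map (smulDivEnd σ)).relIndex ((⊤ : Subgroup Kˣ).map (smulDivEnd σ)) =
      ramificationIndex p F K := by
  rw [Subgroup.relIndex_map_map, ker_smulDivEnd hσ, top_sup_eq, Subgroup.relIndex_top_right,
    sup_comm, ramificationIndex_eq_index]

omit [IsScalarTower ℚ_[p] F K] [FiniteDimensional F K] [IsGalois F K] in
lemma relIndex_map_normEnd_unitGroup : ((unitGroup p K).map (normEnd F K)).relIndex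
      ((unitGroup p F).map (unitsAlgebraMap F K)) =
    ((unitGroup p K).map (unitsNorm F K)).relIndex (unitGroup p F) := by
  rw [← Subgroup.relIndex_map_map_of_injective _ _ (unitsAlgebraMap_injective (F := F) (K := K)),
    Subgroup.map_map]
  rfl

lemma relIndex_map_unitsNorm_of_isCyclic [IsCyclic Gal(K/F)] :
    ((unitGroup p K).map (unitsNorm F K)).relIndex (unitGroup p F) = ramificationIndex p F K := by
  obtain ⟨σ, hσ⟩ := IsCyclic.exists_generator (α := Gal(K/F))
  obtain ⟨w, hw⟩ := exists_isGaloisAdapted p F K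
  have hρ : (1 / 2 : ℝ) ∈ Set.Ioo 0 1 := by norm_num
  have hnorm : (unitGroup p K).map (normEnd F K) ≤ unitGroup p K := by
    rintro _ ⟨u, hu, rfl⟩
    exact (unitsAlgebraMap_mem_unitGroup p).2 (unitsNorm_mem_unitGroup.2 hu)
  have hsmulDiv : (unitGroup p K).map (smulDivEnd σ) ≤ unitGroup p K := by
    rintro _ ⟨u, -, rfl⟩
    exact smulDivEnd_mem_unitGroup σ u
  have hherbrand := relIndex_map_inf_ker_eq_of_relIndex_ne_zero (normEnd_smulDivEnd σ)
    (smulDivEnd_normEnd hσ) (unitFiltration_le_unitGroup hw.isNonarchimedean hρ 0) hnorm hsmulDiv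
    (unitFiltration_inf_ker_normEnd hw hρ hσ) (unitFiltration_inf_ker_smulDivEnd hw hρ hσ)
    (relIndex_unitFiltration_ne_zero hw.isNonarchimedean hρ 0)
  rwa [unitGroup_inf_ker_smulDivEnd hσ, unitGroup_inf_ker_normEnd hσ,
    relIndex_map_normEnd_unitGroup, relIndex_map_smulDivEnd_unitGroup hσ] at hherbrand

end CyclicIndex

section Descent

variable {E M L : Type*} [Field E] [Field M] [Field L] [Algebra E M] [Algebra E L] [Algebra M L]
  [IsScalarTower E M L]

lemma smul_unitsAlgebraMap [Normal E M] (g : Gal(L/E)) (x : Mˣ) :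
    g • unitsAlgebraMap M L x = unitsAlgebraMap M L (g.restrictNormal M • x) :=
  Units.ext (g.restrictNormal_commutes M (x : M)).symm

lemma unitsNorm_smul_restrictNormal [Normal E M] (g : Gal(L/E)) (x : Lˣ) :
    unitsNorm M L (g • x) = g.restrictNormal M • unitsNorm M L x := by
  refine Units.ext ?_
  have hnorm := Algebra.norm_eq_of_equiv_equiv (g.restrictNormal M).toRingEquiv g.toRingEquiv
    (RingHom.ext fun y => g.restrictNormal_commutes M y) (x : L)
  exact ((g.restrictNormal M).toRingEquiv.symm_apply_eq.1 hnorm.symm)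

lemma unitsNorm_unitsNorm [FiniteDimensional E M] [FiniteDimensional M L] (x : Lˣ) :
    unitsNorm E M (unitsNorm M L x) = unitsNorm E L x :=
  Units.ext Algebra.norm_norm

omit [Algebra E M] [Algebra E L] [IsScalarTower E M L] in
lemma exists_unitsAlgebraMap_apply_eq [FiniteDimensional M L] [IsGalois M L] {φ : Lˣ →* Lˣ}
    (hφ : ∀ (g : Gal(L/M)) x, φ (g • x) = g • φ x) :
    ∃ ψ : Mˣ →* Mˣ, ∀ x, unitsAlgebraMap M L (ψ x) = φ (unitsAlgebraMap M L x) := by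
  let e := MonoidHom.ofInjective (unitsAlgebraMap_injective (F := M) (K := L))
  let φ' : Mˣ →* (unitsAlgebraMap M L).range :=
    (φ.comp (unitsAlgebraMap M L)).codRestrict _ fun x =>
      mem_range_unitsAlgebraMap_iff.2 fun g => by
        rw [MonoidHom.comp_apply, ← hφ, mem_range_unitsAlgebraMap_iff.1 ⟨x, rfl⟩]
  exact ⟨e.symm.toMonoidHom.comp φ', fun x => congrArg Subtype.val (e.apply_symm_apply (φ' x))⟩

omit [Algebra E M] [Algebra E L] [IsScalarTower E M L] in
lemma unitsAlgebraMap_unitsNorm_apply [FiniteDimensional M L] [IsGalois M L] {φ : Lˣ →* Lˣ}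
    (hφ : ∀ (g : Gal(L/M)) x, φ (g • x) = g • φ x) (x : Lˣ) :
    unitsAlgebraMap M L (unitsNorm M L (φ x)) = φ (unitsAlgebraMap M L (unitsNorm M L x)) := by
  simp only [unitsAlgebraMap_unitsNorm, map_prod, hφ]

end Descent

section SeparatingUniformizers

variable {p : ℕ} [Fact p.Prime] {E M L : Type*} [Field E] [Field M] [Field L]
  [Algebra ℚ_[p] E] [FiniteDimensional ℚ_[p] E] [Algebra ℚ_[p] M] [FiniteDimensional ℚ_[p] M]
  [Algebra ℚ_[p] L] [FiniteDimensional ℚ_[p] L]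
  [Algebra E M] [IsScalarTower ℚ_[p] E M] [Algebra E L] [IsScalarTower ℚ_[p] E L]
  [Algebra M L] [IsScalarTower ℚ_[p] M L] [IsScalarTower E M L]

omit [FiniteDimensional ℚ_[p] E] in
lemma unitsAbs_smul (g : Gal(L/E)) (x : Lˣ) : unitsAbs p L (g • x) = unitsAbs p L x :=
  Units.ext (absVal_algEquiv p g (x : L))

lemma unitsAbs_pow_mem_valueGroup [FiniteDimensional E L] [IsGalois E L] {τ : Gal(L/E)}
    (hτ : ∀ g, g ∈ Subgroup.zpowers τ) {φ : Lˣ →* Lˣ}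
    (hφabs : ∀ x, unitsAbs p L (φ x) = unitsAbs p L x)
    (hφ : ∀ (g : Gal(L/E)) x, φ (g • x) = g • φ x) {π ϖ : Lˣ} (hϖ : φ ϖ = ϖ) {j : ℕ}
    (hπ : φ π = τ ^ j • π) (hN : unitsNorm E L π = unitsNorm E L ϖ) :
    unitsAbs p L π ^ j ∈ valueGroup p E := by
  obtain ⟨z, hz⟩ := exists_smul_div_eq_of_unitsNorm_eq_one hτ (u := π / ϖ)
    (by rw [map_div, hN, div_self'])
  set P := ∏ i ∈ Finset.range j, τ ^ i • π
  have hP : smulDivEnd τ P = τ ^ j • π / π := by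
    have htelescope := Finset.prod_range_div (fun i => τ ^ i • π) j
    rw [pow_zero, one_smul] at htelescope
    simp only [← htelescope, P, map_prod, smulDivEnd_apply, smul_smul, pow_succ']
  have hφz : smulDivEnd τ (φ z / z) = τ ^ j • π / π := by
    rw [smulDivEnd_apply, smul_div', ← hφ, div_div_div_comm, ← map_div, hz, map_div, hϖ, hπ,
      div_div_div_cancel_right]
  have hker : φ z / z / P ∈ (smulDivEnd τ).ker := by
    rw [MonoidHom.mem_ker, map_div, hφz, hP, div_self']
  rw [ker_smulDivEnd hτ] at hker
  obtain ⟨x, hx⟩ := hker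
  refine ⟨x⁻¹, ?_⟩
  rw [← unitsAbs_unitsAlgebraMap p (K := L), map_inv, hx, inv_div, map_div, map_div, hφabs,
    div_self', div_one]
  simp only [P, map_prod, unitsAbs_smul, Finset.prod_const, Finset.card_range]

variable (M) in
omit [IsScalarTower ℚ_[p] E L] in
lemma restrictNormal_eq_one_of_isCyclic [FiniteDimensional E L] [IsGalois E L] [IsGalois E M]
    [IsCyclic Gal(M/E)] {φ : Lˣ →* Lˣ} (hφabs : ∀ x, unitsAbs p L (φ x) = unitsAbs p L x)
    (hφ : ∀ (g : Gal(L/E)) x, φ (g • x) = g • φ x) {π ϖ : Lˣ} (hϖ : φ ϖ = ϖ)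
    {σ : Gal(L/E)} (hπ : φ π = σ • π) (hN : unitsNorm E L π = unitsNorm E L ϖ)
    (hval : ∀ k, unitsAbs p L π ^ k ∈ valueGroup p E → Module.finrank E L ∣ k) :
    σ.restrictNormal M = 1 := by
  have : FiniteDimensional M L := .right E M L
  have : FiniteDimensional E M := .left E M L
  have : IsGalois M L := .tower_top_of_isGalois E M L
  obtain ⟨τ, hτ⟩ := IsCyclic.exists_generator (α := Gal(M/E))
  obtain ⟨j, hj⟩ := mem_powers_iff_mem_zpowers.2 (hτ (σ.restrictNormal M))
  have hφM (g : Gal(L/M)) (x : Lˣ) : φ (g • x) = g • φ x := hφ (g.restrictScalars E) x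
  obtain ⟨ψ, hψ⟩ := exists_unitsAlgebraMap_apply_eq hφM
  have hψnorm (x : Lˣ) : ψ (unitsNorm M L x) = unitsNorm M L (φ x) :=
    unitsAlgebraMap_injective (K := L) (by rw [hψ, unitsAlgebraMap_unitsNorm_apply hφM])
  have hmem : unitsAbs p M (unitsNorm M L π) ^ j ∈ valueGroup p E := by
    refine unitsAbs_pow_mem_valueGroup hτ (φ := ψ) (fun x => ?_) (fun g x => ?_)
      (ϖ := unitsNorm M L ϖ) ?_ ?_ ?_
    · rw [← unitsAbs_unitsAlgebraMap p (K := L), hψ, hφabs,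
        unitsAbs_unitsAlgebraMap]
    · obtain ⟨g, rfl⟩ := AlgEquiv.restrictNormalHom_surjective L g
      refine unitsAlgebraMap_injective (K := L) ?_
      rw [hψ]
      change φ (unitsAlgebraMap M L (g.restrictNormal M • x)) =
        unitsAlgebraMap M L (g.restrictNormal M • ψ x)
      rw [← smul_unitsAlgebraMap, ← smul_unitsAlgebraMap, hφ, hψ]
    · rw [hψnorm, hϖ]
    · rw [hψnorm, hπ, unitsNorm_smul_restrictNormal, ← hj]
    · rw [unitsNorm_unitsNorm, unitsNorm_unitsNorm, hN]
  rw [unitsAbs_unitsNorm, ← pow_mul] at hmem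
  have hdvd := hval _ hmem
  rw [← Module.finrank_mul_finrank E M L, mul_comm (Module.finrank E M)] at hdvd
  rw [← hj]
  refine orderOf_dvd_iff_pow_eq_one.1 ?_
  rw [orderOf_eq_card_of_forall_mem_zpowers hτ, IsGalois.card_aut_eq_finrank]
  exact Nat.dvd_of_mul_dvd_mul_left Module.finrank_pos hdvd

open scoped IsMulCommutative in
lemma exists_isCyclic_restrictNormal_ne_one [FiniteDimensional E L] [IsAbelianGalois E L]
    {σ : Gal(L/E)} (hσ : σ ≠ 1) : ∃ M : IntermediateField E L, IsCyclic Gal(M/E) ∧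
      σ.restrictNormal M ≠ 1 := by
  obtain ⟨χ, hχ⟩ := CommGroup.exists_apply_ne_one_of_hasEnoughRootsOfUnity Gal(L/E) ℂ hσ
  refine ⟨IntermediateField.fixedField χ.ker, ?_, fun h => hχ ?_⟩
  · have : IsCyclic χ.range := inferInstance
    exact isCyclic_of_surjective ((QuotientGroup.quotientKerEquivRange χ).symm.trans
      (IsGalois.normalAutEquivQuotient χ.ker)) (MulEquiv.surjective _)
  · rw [← MonoidHom.mem_ker, ← IntermediateField.fixingSubgroup_fixedField χ.ker,
      ← IntermediateField.restrictNormalHom_ker]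
    exact h

lemma eq_one_of_unitsNorm_eq [FiniteDimensional E L] [IsAbelianGalois E L] {φ : Lˣ →* Lˣ}
    (hφabs : ∀ x, unitsAbs p L (φ x) = unitsAbs p L x)
    (hφ : ∀ (g : Gal(L/E)) x, φ (g • x) = g • φ x) {π ϖ : Lˣ} (hϖ : φ ϖ = ϖ)
    {σ : Gal(L/E)} (hπ : φ π = σ • π) (hN : unitsNorm E L π = unitsNorm E L ϖ)
    (hval : ∀ k, unitsAbs p L π ^ k ∈ valueGroup p E → Module.finrank E L ∣ k) : σ = 1 := by
  by_contra hσ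
  obtain ⟨M, hM, hσM⟩ := exists_isCyclic_restrictNormal_ne_one hσ
  have : FiniteDimensional ℚ_[p] M := .trans ℚ_[p] E M
  have : IsScalarTower ℚ_[p] M L := .of_algebraMap_eq fun _ => rfl
  exact hσM (restrictNormal_eq_one_of_isCyclic M hφabs hφ hϖ hπ hN hval)

end SeparatingUniformizers

section Integers

variable (p : ℕ) [Fact p.Prime]

section

variable (F : Type*) [Field F] [Algebra ℚ_[p] F] [Algebra.IsAlgebraic ℚ_[p] F]

/-- The ring of integers `𝒪_F`, as the ring of elements of absolute value at most `1`. -/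
noncomputable def integers : ValuationSubring F where
  carrier := {x | absVal p F x ≤ 1}
  mul_mem' ha hb := (map_mul (absVal p F) _ _).trans_le (mul_le_one₀ ha (apply_nonneg _ _) hb)
  one_mem' := (map_one (absVal p F)).le
  add_mem' ha hb := (isNonarchimedean_absVal p _ _).trans (max_le ha hb)
  zero_mem' := (map_zero (absVal p F)).trans_le zero_le_one
  neg_mem' {x} (hx : absVal p F x ≤ 1) := (map_neg_eq_map _ x).trans_le hx
  mem_or_inv_mem' x := (le_total (absVal p F x) 1).imp id fun hx =>
    (map_inv₀ _ _).trans_le (inv_le_one_of_one_le₀ hx)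

variable {F}

lemma mem_integers {x : F} : x ∈ integers p F ↔ absVal p F x ≤ 1 := Iff.rfl

lemma integers_dvd_iff {x y : integers p F} : x ∣ y ↔ absVal p F y ≤ absVal p F x := by
  refine ⟨?_, fun h => ?_⟩
  · rintro ⟨z, rfl⟩
    rw [MulMemClass.coe_mul, map_mul]
    exact mul_le_of_le_one_right (apply_nonneg _ _) z.2
  · rcases eq_or_ne (x : F) 0 with hx | hx
    · have hy : (y : F) = 0 := (map_eq_zero _).1 (le_antisymm (by simpa [hx] using h)
        (apply_nonneg _ _))
      rw [Subtype.ext (hx.trans hy.symm)]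
    · refine ⟨⟨y / x, ?_⟩, Subtype.ext (mul_div_cancel₀ _ hx).symm⟩
      rw [mem_integers, map_div₀]
      exact div_le_one_of_le₀ h (apply_nonneg _ _)

lemma mem_maximalIdeal_integers {x : integers p F} :
    x ∈ IsLocalRing.maximalIdeal (integers p F) ↔ absVal p F x < 1 := by
  rw [IsLocalRing.mem_maximalIdeal, mem_nonunits_iff, isUnit_iff_dvd_one, integers_dvd_iff,
    OneMemClass.coe_one, map_one, not_le]

variable {p} in
lemma IsUniformizer.maximalIdeal_eq_span {π : Fˣ} (hπ : IsUniformizer p π) :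
    IsLocalRing.maximalIdeal (integers p F) = Ideal.span {⟨π, hπ.lt_one.le⟩} := by
  ext x
  rw [mem_maximalIdeal_integers, Ideal.mem_span_singleton, integers_dvd_iff]
  exact ⟨hπ.absVal_le, fun h => h.trans_lt hπ.lt_one⟩

variable {p} in
lemma IsUniformizer.exists_pow_eq {π : Fˣ} (hπ : IsUniformizer p π) {x : Fˣ}
    (hx : absVal p F x ≤ 1) : ∃ n : ℕ, absVal p F π ^ n = absVal p F x := by
  obtain ⟨n, hn⟩ := hπ.exists_zpow_eq x
  rw [← hn, ← zpow_zero (absVal p F π),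
    (zpow_right_strictAnti₀ (absVal_pos p π.ne_zero) hπ.lt_one).le_iff_ge] at hx
  lift n to ℕ using hx
  exact ⟨n, by exact_mod_cast hn⟩

end

section

variable (F : Type*) [Field F] [Algebra ℚ_[p] F] [FiniteDimensional ℚ_[p] F]

instance : IsDiscreteValuationRing (integers p F) := by
  obtain ⟨π, hπ⟩ := exists_isUniformizer (p := p) F
  refine .ofHasUnitMulPowIrreducibleFactorization ⟨⟨π, hπ.lt_one.le⟩,
    IsDiscreteValuationRing.irreducible_of_span_eq_maximalIdeal _ ?_ hπ.maximalIdeal_eq_span,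
    fun {x} hx => ?_⟩
  · exact fun h => π.ne_zero (congrArg Subtype.val h)
  · obtain ⟨n, hn⟩ := hπ.exists_pow_eq (x := Units.mk0 (x : F) (by simpa using hx)) x.2
    refine ⟨n, associated_of_dvd_dvd ?_ ?_⟩ <;> rw [integers_dvd_iff, SubmonoidClass.coe_pow,
      map_pow, hn, Units.val_mk0]

instance : Finite (IsLocalRing.ResidueField (integers p F)) := by
  obtain ⟨T, hT, hcover⟩ := exists_finite_cover (absVal p F).toAlgebraNorm one_pos
  have : Finite (Subtype.val ⁻¹' T : Set (integers p F)) :=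
    (hT.preimage Subtype.val_injective.injOn).to_subtype
  refine Finite.of_surjective (fun t : (Subtype.val ⁻¹' T : Set (integers p F)) =>
    IsLocalRing.residue _ t.1) fun k => ?_
  obtain ⟨x, rfl⟩ := IsLocalRing.residue_surjective k
  obtain ⟨t, ht, hxt⟩ := hcover x x.2
  have ht_mem : t ∈ integers p F := by
    rw [mem_integers, ← sub_sub_cancel (x : F) t]
    exact (absVal_sub_le_max p _ _).trans (max_le x.2 hxt.le)
  refine ⟨⟨⟨t, ht_mem⟩, ht⟩, ?_⟩
  rw [← sub_eq_zero, ← map_sub, IsLocalRing.residue_eq_zero_iff, mem_maximalIdeal_integers]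
  exact (map_sub_rev (absVal p F) _ _).trans_lt hxt

end

section

variable {p} {F : Type*} [Field F] [Algebra ℚ_[p] F] [FiniteDimensional ℚ_[p] F]
  {K : Type*} [Field K] [Algebra ℚ_[p] K] [FiniteDimensional ℚ_[p] K]
  [Algebra F K] [IsScalarTower ℚ_[p] F K]

lemma IsUniformizer.pow_ramificationIndex {π : Kˣ} (hπ : IsUniformizer p π) {ϖ : Fˣ}
    (hϖ : IsUniformizer p ϖ) : absVal p K π ^ ramificationIndex p F K = absVal p F ϖ := by
  have hϖK : unitsAbs p K (unitsAlgebraMap F K ϖ) = unitsAbs p F ϖ := unitsAbs_unitsAlgebraMap p ϖ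
  obtain ⟨n, hn⟩ := hπ.exists_pow_eq (x := unitsAlgebraMap F K ϖ) <| by
    rw [← coe_unitsAbs, hϖK]
    exact hϖ.lt_one.le
  have hn' : unitsAbs p K π ^ n = unitsAbs p F ϖ := by rw [← hϖK, Units.ext_iff]; exact hn
  have hdvd : ramificationIndex p F K ∣ n := hπ.ramificationIndex_dvd ⟨ϖ, hn'.symm⟩
  have hmem : unitsAbs p K π ^ ramificationIndex p F K ∈ valueGroup p F := by
    rw [ramificationIndex, Subgroup.relIndex]
    exact ((valueGroup p F).subgroupOf _).pow_index_mem ⟨_, unitsAbs_mem_valueGroup p π⟩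
  rw [hϖ.valueGroup_eq, ← hn'] at hmem
  obtain ⟨k, hk⟩ := hmem
  have hkn : (ramificationIndex p F K : ℤ) = n * k := by
    refine zpow_right_injective₀ (absVal_pos p π.ne_zero) hπ.lt_one.ne ?_
    simpa [Units.ext_iff, zpow_mul] using hk.symm
  rw [Nat.dvd_antisymm hdvd (Int.natCast_dvd_natCast.1 ⟨k, hkn⟩), hn, ← coe_unitsAbs, hϖK]
  rfl

end

end Integers

section Inertia

variable (p : ℕ) [Fact p.Prime]
  {F : Type*} [Field F] [Algebra ℚ_[p] F] [FiniteDimensional ℚ_[p] F]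
  {K : Type*} [Field K] [Algebra ℚ_[p] K] [FiniteDimensional ℚ_[p] K]
  [Algebra F K] [IsScalarTower ℚ_[p] F K]

noncomputable instance : Algebra (integers p F) (integers p K) :=
  RingHom.toAlgebra <| ((algebraMap F K).comp (integers p F).subtype).codRestrict (integers p K)
    fun x => (absVal_algebraMap p (K := K) (x : F)).trans_le x.2

@[simp] lemma coe_algebraMap_integers (x : integers p F) :
    (algebraMap (integers p F) (integers p K) x : K) = algebraMap F K x := rfl

instance : IsScalarTower (integers p F) (integers p K) K := .of_algebraMap_eq fun _ => rfl

noncomputable instance : MulSemiringAction Gal(K/F) (integers p K) where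
  smul g x := ⟨g x, (absVal_algEquiv p g (x : K)).trans_le x.2⟩
  one_smul _ := rfl
  mul_smul _ _ _ := rfl
  smul_zero g := Subtype.ext (map_zero g)
  smul_add g _ _ := Subtype.ext (map_add g _ _)
  smul_one g := Subtype.ext (map_one g)
  smul_mul g _ _ := Subtype.ext (map_mul g _ _)

omit [FiniteDimensional ℚ_[p] F] in
@[simp] lemma coe_smul_integers (g : Gal(K/F)) (x : integers p K) :
    ((g • x : integers p K) : K) = g x := rfl

instance : (IsLocalRing.maximalIdeal (integers p K)).LiesOver
    (IsLocalRing.maximalIdeal (integers p F)) := by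
  refine ⟨Ideal.ext fun x => ?_⟩
  rw [Ideal.mem_comap, mem_maximalIdeal_integers, mem_maximalIdeal_integers,
      coe_algebraMap_integers, absVal_algebraMap]

variable (F K) in
/-- The inertia group of `K/F`: the automorphisms acting trivially on the residue field. -/
noncomputable def inertia : Subgroup Gal(K/F) :=
  (IsLocalRing.maximalIdeal (integers p K)).inertia Gal(K/F)

omit [FiniteDimensional ℚ_[p] F] in
lemma mem_inertia {g : Gal(K/F)} :
    g ∈ inertia p F K ↔ ∀ x, absVal p K x ≤ 1 → absVal p K (g x - x) < 1 := by
  change (∀ x, g • x - x ∈ IsLocalRing.maximalIdeal (integers p K)) ↔ _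
  simp only [mem_maximalIdeal_integers]
  exact Subtype.forall

open scoped Pointwise

variable [FiniteDimensional F K] [IsGalois F K]

instance : IsGaloisGroup Gal(K/F) (integers p F) (integers p K) where
  faithful := ⟨fun {g h} hgh => AlgEquiv.ext fun x => by
    obtain ⟨a, b, -, rfl⟩ := IsFractionRing.div_surjective (integers p K) x
    have heq (c : integers p K) : g (c : K) = h (c : K) := congrArg Subtype.val (hgh c)
    exact (map_div₀ g _ _).trans (((congrArg₂ _ (heq a) (heq b))).trans (map_div₀ h _ _).symm)⟩
  commutes := ⟨fun g x y => Subtype.ext <|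
    (map_mul g _ _).trans (congrArg (· * _) (g.commutes (x : F)))⟩
  isInvariant := ⟨fun x hx => by
    obtain ⟨y, hy⟩ := (IsGalois.mem_range_algebraMap_iff_fixed (F := F) (x : K)).2
      fun g => congrArg Subtype.val (hx g)
    exact ⟨⟨y, by rw [mem_integers, ← absVal_algebraMap p (K := K), hy]; exact x.2⟩,
      Subtype.ext hy⟩⟩

instance : Module.Finite (integers p F) (integers p K) := by
  have := Algebra.IsInvariant.isIntegral (integers p F) (integers p K) Gal(K/F)
  have : IsIntegralClosure (integers p K) (integers p F) K :=
    IsIntegralClosure.of_isIntegrallyClosed _ _ _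
  exact IsIntegralClosure.finite (integers p F) F K (integers p K)

instance : Module.Flat (integers p F) (integers p K) := by
  have : FaithfulSMul (integers p F) (integers p K) := (faithfulSMul_iff_algebraMap_injective _ _).2
    fun x y hxy => Subtype.ext ((algebraMap F K).injective (congrArg Subtype.val hxy))
  infer_instance

instance : Finite (IsLocalRing.maximalIdeal (integers p F)).ResidueField := by
  have : Finite (integers p F ⧸ IsLocalRing.maximalIdeal (integers p F)) :=
    inferInstanceAs (Finite (IsLocalRing.ResidueField (integers p F)))
  exact .of_surjective _ (Ideal.bijective_algebraMap_quotient_residueField _).surjective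

lemma card_inertia : Nat.card (inertia p F K) = ramificationIndex p F K := by
  obtain ⟨π, hπ⟩ := exists_isUniformizer (p := p) K
  obtain ⟨ϖ, hϖ⟩ := exists_isUniformizer (p := p) F
  have hle (n : ℕ) : (IsLocalRing.maximalIdeal (integers p F)).map (algebraMap _ (integers p K)) ≤
      IsLocalRing.maximalIdeal (integers p K) ^ n ↔ absVal p F ϖ ≤ absVal p K π ^ n := by
    rw [hπ.maximalIdeal_eq_span, hϖ.maximalIdeal_eq_span, Ideal.map_span, Set.image_singleton,
      Ideal.span_singleton_pow, Ideal.span_singleton_le_span_singleton, integers_dvd_iff,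
      coe_algebraMap_integers, absVal_algebraMap, SubmonoidClass.coe_pow, map_pow]
  rw [inertia, Ideal.card_inertia_eq_ramificationIdxIn (IsLocalRing.maximalIdeal (integers p F)),
    Ideal.ramificationIdxIn_eq_ramificationIdx _ (IsLocalRing.maximalIdeal (integers p K))
    Gal(K/F), ← Ideal.ramificationIdx'_eq_ramificationIdx (IsLocalRing.maximalIdeal (integers p F))
    _ (IsDiscreteValuationRing.not_a_field _)]
  refine Ideal.ramificationIdx'_spec ?_ ?_ <;> rw [hle, ← hπ.pow_ramificationIndex hϖ]
  rw [not_le]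
  exact pow_lt_pow_right_of_lt_one₀ (absVal_pos p π.ne_zero) hπ.lt_one (Nat.lt_succ_self _)

lemma card_residueField_pow_index_inertia :
    Nat.card (IsLocalRing.ResidueField (integers p F)) ^ (inertia p F K).index =
      Nat.card (IsLocalRing.ResidueField (integers p K)) := by
  have hstab : MulAction.stabilizer Gal(K/F) (IsLocalRing.maximalIdeal (integers p K)) = ⊤ :=
    eq_top_iff.2 fun g _ => Ideal.ext fun x => by
      rw [Ideal.mem_pointwise_smul_iff_inv_smul_mem, mem_maximalIdeal_integers,
        mem_maximalIdeal_integers, coe_smul_integers, absVal_algEquiv]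
  have hcard := Ideal.card_stabilizer_eq_card_inertia_mul_finrank (G := Gal(K/F))
    (IsLocalRing.maximalIdeal (integers p F)) (IsLocalRing.maximalIdeal (integers p K))
  rw [hstab, Subgroup.card_top, ← (inertia p F K).card_mul_index] at hcard
  rw [Nat.eq_of_mul_eq_mul_left Nat.card_pos hcard]
  exact Ideal.cardQuot_pow_inertiaDeg _ _

variable (F K) in
omit [FiniteDimensional ℚ_[p] F] [IsGalois F K] [FiniteDimensional F K] in
lemma exists_residueField_hom_ker_eq_inertia :
    ∃ k : Subfield (IsLocalRing.ResidueField (integers p K)),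
      ∃ ρ : Gal(K/F) →* Gal(IsLocalRing.ResidueField (integers p K)/k), ρ.ker = inertia p F K := by
  refine ⟨FixedPoints.subfield Gal(K/F) _, MulSemiringAction.toAlgAut _ _ _,
    Subgroup.ext fun g => ?_⟩
  rw [MonoidHom.mem_ker, AlgEquiv.ext_iff, IsLocalRing.residue_surjective.forall]
  refine forall_congr' fun x => ?_
  rw [← sub_eq_zero, AlgEquiv.one_apply, MulSemiringAction.toAlgAut_apply,
    MulSemiringAction.toAlgEquiv_apply, ← IsLocalRing.ResidueField.residue_smul, ← map_sub,
    IsLocalRing.residue_eq_zero_iff]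
  rfl

omit [FiniteDimensional ℚ_[p] F] [IsGalois F K] [FiniteDimensional F K] in
instance : (inertia p F K).Normal := by
  obtain ⟨k, ρ, hρ⟩ := exists_residueField_hom_ker_eq_inertia p F K
  exact hρ ▸ ρ.normal_ker

omit [FiniteDimensional ℚ_[p] F] [IsGalois F K] [FiniteDimensional F K] in
instance : IsCyclic (Gal(K/F) ⧸ inertia p F K) := by
  obtain ⟨k, ρ, hρ⟩ := exists_residueField_hom_ker_eq_inertia p F K
  have : IsCyclic (Gal(K/F) ⧸ ρ.ker) :=
    isCyclic_of_injective _ (QuotientGroup.kerLift_injective ρ)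
  exact isCyclic_of_surjective _ (QuotientGroup.quotientMulEquivOfEq hρ).surjective

end Inertia

open IntermediateField

section UpperBound

variable {p : ℕ} [Fact p.Prime]
  {F : Type*} [Field F] [Algebra ℚ_[p] F] [FiniteDimensional ℚ_[p] F]

lemma map_unitsNorm_le {K : Type*} [Field K] [Algebra ℚ_[p] K] [FiniteDimensional ℚ_[p] K]
    [Algebra F K] [IsScalarTower ℚ_[p] F K] [FiniteDimensional F K] [IsGalois F K] :
    (unitGroup p K).map (unitsNorm F K) ≤ unitGroup p F := by
  rintro _ ⟨x, hx, rfl⟩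
  exact unitsNorm_mem_unitGroup.2 hx

lemma relIndex_map_dvd {G G' : Type*} [CommGroup G] [CommGroup G'] (f : G →* G')
    {V U : Subgroup G} (h : V ≤ U) : (V.map f).relIndex (U.map f) ∣ V.relIndex U :=
  Dvd.intro _ (relIndex_eq_map_mul_inf_ker f h).symm

lemma exists_finrank_prime {K : Type*} [Field K] [Algebra F K] [FiniteDimensional F K]
    [IsGalois F K] (h : Module.finrank F K ≠ 1) :
    ∃ M : IntermediateField F K, (Module.finrank M K).Prime := by
  obtain ⟨l, hl, hdvd⟩ := Nat.exists_prime_and_dvd h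
  have : Fact l.Prime := ⟨hl⟩
  rw [← IsGalois.card_aut_eq_finrank] at hdvd
  obtain ⟨g, rfl⟩ := exists_prime_orderOf_dvd_card' l hdvd
  exact ⟨fixedField (Subgroup.zpowers g), by rwa [finrank_fixedField_eq_card, Nat.card_zpowers]⟩

universe v

lemma relIndex_map_unitsNorm_dvd (K : Type v) [Field K] [Algebra ℚ_[p] K]
    [FiniteDimensional ℚ_[p] K] [Algebra F K] [IsScalarTower ℚ_[p] F K] [FiniteDimensional F K]
    [IsAbelianGalois F K] :
    ((unitGroup p K).map (unitsNorm F K)).relIndex (unitGroup p F) ∣ ramificationIndex p F K := by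
  induction hn : Module.finrank F K using Nat.strong_induction_on generalizing K with
  | _ n ih =>
  by_cases h1 : Module.finrank F K = 1
  · have : Subsingleton Gal(K/F) :=
      (Nat.card_eq_one_iff_unique.1 ((IsGalois.card_aut_eq_finrank F K).trans h1)).1
    rw [relIndex_map_unitsNorm_of_isCyclic]
  obtain ⟨M, hM⟩ := exists_finrank_prime h1
  have : FiniteDimensional ℚ_[p] M := .trans ℚ_[p] F M
  have : IsScalarTower ℚ_[p] M K := .of_algebraMap_eq fun _ => rfl
  have : Fact (Module.finrank M K).Prime := ⟨hM⟩
  have : IsCyclic Gal(K/M) := isCyclic_of_prime_card (IsGalois.card_aut_eq_finrank M K)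
  have hlt : Module.finrank F M < n := by
    rw [← hn, ← Module.finrank_mul_finrank F M K]
    exact lt_mul_of_one_lt_right Module.finrank_pos hM.one_lt
  have htrans : (unitsNorm F M).comp (unitsNorm M K) = unitsNorm F K :=
    MonoidHom.ext unitsNorm_unitsNorm
  rw [← htrans, ← Subgroup.map_map, ← Subgroup.relIndex_mul_relIndex _ _ _
    (Subgroup.map_mono map_unitsNorm_le) (map_unitsNorm_le (K := M)), mul_comm,
    ← ramificationIndex_mul p F M K, ← relIndex_map_unitsNorm_of_isCyclic (F := M) (K := K)]
  exact mul_dvd_mul (ih _ hlt M rfl) (relIndex_map_dvd _ map_unitsNorm_le)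

end UpperBound

section InertiaTower

variable {p : ℕ} [Fact p.Prime]
  {F : Type*} [Field F] [Algebra ℚ_[p] F] [FiniteDimensional ℚ_[p] F]
  {K : Type*} [Field K] [Algebra ℚ_[p] K] [FiniteDimensional ℚ_[p] K]
  [Algebra F K] [IsScalarTower ℚ_[p] F K] [FiniteDimensional F K] [IsGalois F K]

lemma ramificationIndex_eq_one (h : inertia p F K = ⊥) : ramificationIndex p F K = 1 := by
  rw [← card_inertia, h, Subgroup.card_bot]

lemma ramificationIndex_eq_finrank (h : inertia p F K = ⊤) :
    ramificationIndex p F K = Module.finrank F K := by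
  rw [← card_inertia, h, Subgroup.card_top, IsGalois.card_aut_eq_finrank]

omit [FiniteDimensional ℚ_[p] F] [FiniteDimensional ℚ_[p] K] [IsGalois F K] in
lemma restrictScalars_mem_of_fixedField {H : Subgroup Gal(K/F)} (g : Gal(K/fixedField H)) :
    g.restrictScalars F ∈ H := by
  have hmem : g.restrictScalars F ∈ fixingSubgroup (fixedField H) :=
    (mem_fixingSubgroup_iff _ _).2 fun x hx => g.commutes ⟨x, hx⟩
  rwa [fixingSubgroup_fixedField] at hmem

variable (p) in
omit [FiniteDimensional ℚ_[p] F] [IsGalois F K] in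
lemma inertia_fixedField_eq_bot {H : Subgroup Gal(K/F)} (h : Disjoint H (inertia p F K))
    [FiniteDimensional ℚ_[p] (fixedField H)] [IsScalarTower ℚ_[p] (fixedField H) K] :
    inertia p (fixedField H) K = ⊥ :=
  (Subgroup.eq_bot_iff_forall _).2 fun g hg => AlgEquiv.restrictScalars_injective F <|
    Subgroup.disjoint_def.1 h (restrictScalars_mem_of_fixedField g) hg

omit [FiniteDimensional ℚ_[p] F] [IsGalois F K] in
lemma inertia_fixedField_eq_top {H : Subgroup Gal(K/F)} (h : H ≤ inertia p F K)
    [IsScalarTower ℚ_[p] (fixedField H) K] : inertia p (fixedField H) K = ⊤ :=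
  eq_top_iff.2 fun g _ => h (restrictScalars_mem_of_fixedField g)

end InertiaTower

section LowerBound

variable {p : ℕ} [Fact p.Prime]
  {F : Type*} [Field F] [Algebra ℚ_[p] F] [FiniteDimensional ℚ_[p] F]
  {L : Type*} [Field L] [Algebra ℚ_[p] L] [FiniteDimensional ℚ_[p] L]
  [Algebra F L] [IsScalarTower ℚ_[p] F L] [FiniteDimensional F L] [IsAbelianGalois F L]

omit [FiniteDimensional ℚ_[p] F] [FiniteDimensional ℚ_[p] L] in
lemma unitsAlgebraMap_unitsNorm_fixedField {H I : Subgroup Gal(L/F)} (h : IsCompl H I)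
    (x : (fixedField H)ˣ) :
    unitsNorm (fixedField I) L (unitsAlgebraMap (fixedField H) L x) =
      unitsAlgebraMap F (fixedField I) (unitsNorm F (fixedField H) x) := by
  have hcompl : IsCompl (fixedField H) (fixedField I) :=
    (OrderIso.isCompl (IsGalois.intermediateFieldEquivSubgroup (F := F) (E := L)).symm h.dual)
  refine Units.ext (LinearDisjoint.norm_algebraMap ?_ hcompl.symm.sup_eq_top (x : fixedField H))
  exact .of_inf_eq_bot hcompl.symm.inf_eq_bot

omit [FiniteDimensional ℚ_[p] F] [IsScalarTower ℚ_[p] F L] [IsAbelianGalois F L]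
  [FiniteDimensional F L] in
lemma smul_unitsAlgebraMap_fixedField {H : Subgroup Gal(L/F)} {g : Gal(L/F)} (hg : g ∈ H)
    (x : (fixedField H)ˣ) :
    g • unitsAlgebraMap (fixedField H) L x = unitsAlgebraMap (fixedField H) L x :=
  Units.ext ((x : fixedField H).2 ⟨g, hg⟩)

open scoped IsMulCommutative in
lemma eq_of_unitsNorm_fixedField_eq {ψ ψ' : Gal(L/F)} (hmem : ψ⁻¹ * ψ' ∈ inertia p F L)
    (hψ : IsCompl (Subgroup.zpowers ψ) (inertia p F L))
    (hψ' : IsCompl (Subgroup.zpowers ψ') (inertia p F L))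
    {x : (fixedField (Subgroup.zpowers ψ))ˣ} {y : (fixedField (Subgroup.zpowers ψ'))ˣ}
    (hxy : unitsNorm F _ x = unitsNorm F _ y)
    (hx : IsUniformizer p (unitsAlgebraMap _ L x)) : ψ = ψ' := by
  set E := fixedField (inertia p F L)
  have : FiniteDimensional ℚ_[p] E := .trans ℚ_[p] F E
  have : IsScalarTower ℚ_[p] E L := .of_algebraMap_eq fun _ => rfl
  let σ : Gal(L/E) := subgroupEquivAlgEquiv _ ⟨ψ⁻¹ * ψ', hmem⟩
  suffices hσ : σ = 1 by
    rw [MulEquiv.map_eq_one_iff, Subgroup.mk_eq_one, inv_mul_eq_one] at hσ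
    exact hσ
  refine eq_one_of_unitsNorm_eq (φ := MulDistribMulAction.toMonoidHom Lˣ ψ')
    (π := unitsAlgebraMap _ L x) (ϖ := unitsAlgebraMap _ L y)
    (unitsAbs_smul (p := p) ψ') (fun g z => ?_)
    (smul_unitsAlgebraMap_fixedField (Subgroup.mem_zpowers ψ') y) ?_ ?_ fun k hk => ?_
  · change ψ' • g.restrictScalars F • z = g.restrictScalars F • ψ' • z
    rw [smul_smul, smul_smul, mul_comm]
  · change ψ' • unitsAlgebraMap _ L x = (ψ⁻¹ * ψ') • unitsAlgebraMap _ L x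
    rw [mul_comm, mul_smul, smul_unitsAlgebraMap_fixedField (inv_mem (Subgroup.mem_zpowers ψ))]
  · rw [unitsAlgebraMap_unitsNorm_fixedField hψ, unitsAlgebraMap_unitsNorm_fixedField hψ', hxy]
  · rw [← ramificationIndex_eq_finrank (inertia_fixedField_eq_top le_rfl)]
    exact hx.ramificationIndex_dvd hk

lemma unitsAbs_unitsNorm_fixedField {H I : Subgroup Gal(L/F)} (h : IsCompl H I)
    (x : (fixedField H)ˣ) : unitsAbs p F (unitsNorm F (fixedField H) x) =
      unitsAbs p L (unitsAlgebraMap _ L x) ^ Module.finrank (fixedField I) L := by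
  have : FiniteDimensional ℚ_[p] (fixedField I) := .trans ℚ_[p] F _
  have : IsScalarTower ℚ_[p] (fixedField I) L := .of_algebraMap_eq fun _ => rfl
  rw [← unitsAbs_unitsNorm (F := fixedField I), unitsAlgebraMap_unitsNorm_fixedField h,
    unitsAbs_unitsAlgebraMap]

lemma isCompl_zpowers_mul {G : Type*} [CommGroup G] {H : Subgroup G} {a b : G}
    (h : IsCompl (Subgroup.zpowers a) H) (hb : b ∈ H) (hab : b ^ orderOf a = 1) :
    IsCompl (Subgroup.zpowers (a * b)) H := by
  constructor
  · rw [Subgroup.disjoint_def]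
    rintro _ ⟨k, rfl⟩ (hk : (a * b) ^ k ∈ H)
    have hak : a ^ k = 1 := by
      refine Subgroup.disjoint_def.1 h.disjoint ⟨k, rfl⟩ ?_
      rwa [mul_zpow, Subgroup.mul_mem_cancel_right _ (zpow_mem hb k)] at hk
    have hbk : b ^ k = 1 :=
      orderOf_dvd_iff_zpow_eq_one.1 <| (Int.natCast_dvd_natCast.2
        (orderOf_dvd_of_pow_eq_one hab)).trans (orderOf_dvd_iff_zpow_eq_one.2 hak)
    exact (mul_zpow a b k).trans (by rw [hak, hbk, one_mul])
  · refine codisjoint_iff_le_sup.2 (h.sup_eq_top.ge.trans (sup_le ?_ le_sup_right))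
    rw [Subgroup.zpowers_le]
    simpa only [mul_inv_cancel_right] using
      Subgroup.mul_mem_sup (Subgroup.mem_zpowers (a * b)) (inv_mem hb)

open scoped IsMulCommutative in
lemma exists_separating_family {φ : Gal(L/F)}
    (hφ : IsCompl (Subgroup.zpowers φ) (inertia p F L))
    (hexp : ∀ g ∈ inertia p F L, g ^ orderOf φ = 1) :
    ∃ c : inertia p F L → Fˣ, (∀ σ τ, c σ / c τ ∈ unitGroup p F) ∧
      ∀ σ τ, c σ / c τ ∈ (unitGroup p L).map (unitsNorm F L) → σ = τ := by
  let M (τ : inertia p F L) := fixedField (Subgroup.zpowers (φ * (τ : Gal(L/F))))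
  have hcompl (τ : inertia p F L) :
      IsCompl (Subgroup.zpowers (φ * (τ : Gal(L/F)))) (inertia p F L) :=
    isCompl_zpowers_mul hφ τ.2 (hexp τ τ.2)
  obtain ⟨π, hπ⟩ := exists_isUniformizer (p := p) L
  have hx (τ) : ∃ x : (M τ)ˣ, unitsAbs p L (unitsAlgebraMap _ L x) = unitsAbs p L π := by
    have : FiniteDimensional ℚ_[p] (M τ) := .trans ℚ_[p] F _
    have : IsScalarTower ℚ_[p] (M τ) L := .of_algebraMap_eq fun _ => rfl
    have hbot := inertia_fixedField_eq_bot p (hcompl τ).disjoint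
    obtain ⟨x, hx⟩ := Subgroup.relIndex_eq_one.1 (ramificationIndex_eq_one hbot) ⟨π, rfl⟩
    exact ⟨x, by rwa [unitsAbs_unitsAlgebraMap]⟩
  choose x hx using hx
  refine ⟨fun τ => unitsNorm F (M τ) (x τ), fun σ τ => ?_, ?_⟩
  · rw [unitGroup, MonoidHom.mem_ker, map_div, unitsAbs_unitsNorm_fixedField (hcompl σ),
      unitsAbs_unitsNorm_fixedField (hcompl τ), hx, hx, div_self']
  · rintro σ τ ⟨u, -, hu⟩
    have heq : φ * (σ : Gal(L/F)) = φ * τ := by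
      refine eq_of_unitsNorm_fixedField_eq (y := x τ * unitsNorm (M τ) L u) ?_ (hcompl σ)
        (hcompl τ) (x := x σ) ?_ (hπ.congr ((unitsAbs_eq_iff p).1 (hx σ)))
      · rw [mul_inv_rev, mul_assoc, inv_mul_cancel_left]
        exact mul_mem (inv_mem σ.2) τ.2
      · rw [map_mul, unitsNorm_unitsNorm, hu, mul_div_cancel]
    exact Subtype.ext (mul_left_cancel heq)

lemma card_le_relIndex_of_div_mem {G ι : Type*} [CommGroup G] {H K : Subgroup G}
    (h0 : H.relIndex K ≠ 0) {c : ι → G} (hK : ∀ i j, c i / c j ∈ K)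
    (hH : ∀ i j, c i / c j ∈ H → i = j) : Nat.card ι ≤ H.relIndex K := by
  rcases isEmpty_or_nonempty ι with hι | ⟨⟨o⟩⟩
  · simp
  have : Finite (K ⧸ H.subgroupOf K) := Nat.finite_of_card_ne_zero h0
  refine Nat.card_le_card_of_injective
    (fun i => ((⟨c o / c i, hK o i⟩ : K) : K ⧸ H.subgroupOf K)) fun i j hij => hH i j ?_
  simpa [QuotientGroup.eq, Subgroup.mem_subgroupOf] using hij

theorem relIndex_map_unitsNorm_of_isCompl {φ : Gal(L/F)}
    (hφ : IsCompl (Subgroup.zpowers φ) (inertia p F L))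
    (hexp : ∀ g ∈ inertia p F L, g ^ orderOf φ = 1) :
    ((unitGroup p L).map (unitsNorm F L)).relIndex (unitGroup p F) = ramificationIndex p F L := by
  have hdvd := relIndex_map_unitsNorm_dvd (p := p) (F := F) L
  obtain ⟨c, hc, hsep⟩ := exists_separating_family hφ hexp
  refine (Nat.le_of_dvd ramificationIndex_pos hdvd).antisymm (card_inertia p (F := F) (K := L) ▸
    card_le_relIndex_of_div_mem ?_ hc hsep)
  exact ne_zero_of_dvd_ne_zero ramificationIndex_pos.ne' hdvd

end LowerBound

section RootsOfUnity

lemma eq_one_of_pow_eq_one_of_residue_eq_one {R : Type*} [CommRing R] [IsDomain R] [IsLocalRing R]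
    {N : ℕ} (hN : (N : IsLocalRing.ResidueField R) ≠ 0) {η : R} (hη : η ^ N = 1)
    (h1 : IsLocalRing.residue R η = 1) : η = 1 := by
  have hgeom : ∑ i ∈ Finset.range N, η ^ i ≠ 0 := fun h0 => hN <| by
    simpa [h1] using congrArg (IsLocalRing.residue R) h0
  have hmul : (∑ i ∈ Finset.range N, η ^ i) * (η - 1) = 0 := by
    rw [geom_sum_mul, hη, sub_self]
  exact sub_eq_zero.1 ((mul_eq_zero.1 hmul).resolve_left hgeom)

variable {p : ℕ} [Fact p.Prime]

section

variable {F : Type*} [Field F] [Algebra ℚ_[p] F] [FiniteDimensional ℚ_[p] F]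

instance : CharP (IsLocalRing.ResidueField (integers p F)) p := ⟨fun n => by
  rw [← map_natCast (IsLocalRing.residue _), IsLocalRing.residue_eq_zero_iff,
    mem_maximalIdeal_integers]
  exact absVal_natCast_lt_one_iff p⟩

lemma eq_one_of_pow_eq_one_of_absVal_lt {N : ℕ} (hN : ¬ p ∣ N) {η : F} (hη : η ^ N = 1)
    (h1 : absVal p F (η - 1) < 1) : η = 1 := by
  have hmem : η ∈ integers p F := by
    simpa using add_mem (show η - 1 ∈ integers p F from h1.le) (one_mem _)
  refine congrArg Subtype.val (eq_one_of_pow_eq_one_of_residue_eq_one (N := N) (η := ⟨η, hmem⟩)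
    ?_ (Subtype.ext hη) ?_)
  · rwa [Ne, CharP.cast_eq_zero_iff _ p]
  · rwa [← sub_eq_zero, ← map_one (IsLocalRing.residue _), ← map_sub,
      IsLocalRing.residue_eq_zero_iff, mem_maximalIdeal_integers]

lemma absVal_eq_one_of_pow_eq_one {N : ℕ} (hN : N ≠ 0) {ζ : F} (hζ : ζ ^ N = 1) :
    absVal p F ζ = 1 := by
  rw [← pow_eq_one_iff_of_nonneg (apply_nonneg _ _) hN, ← map_pow, hζ, map_one]

lemma dvd_card_residueField_sub_one {N : ℕ} (hN : ¬ p ∣ N) {ζ : F} (hζ : IsPrimitiveRoot ζ N) :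
    N ∣ Nat.card (IsLocalRing.ResidueField (integers p F)) - 1 := by
  have hN0 : N ≠ 0 := fun h0 => hN (h0 ▸ dvd_zero p)
  have := Fintype.ofFinite (IsLocalRing.ResidueField (integers p F))
  have habs := absVal_eq_one_of_pow_eq_one (p := p) hN0 hζ.pow_eq_one
  let ζ' : integers p F := ⟨ζ, habs.le⟩
  have hres : IsLocalRing.residue _ ζ' ≠ 0 := by
    rw [Ne, IsLocalRing.residue_eq_zero_iff, mem_maximalIdeal_integers]
    exact habs.not_lt
  refine hζ.dvd_of_pow_eq_one _ (eq_one_of_pow_eq_one_of_absVal_lt hN ?_ ?_)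
  · rw [← pow_mul, mul_comm, pow_mul, hζ.pow_eq_one, one_pow]
  · have hpow := FiniteField.pow_card_sub_one_eq_one _ hres
    rwa [← Nat.card_eq_fintype_card, ← map_pow, ← sub_eq_zero, ← map_one (IsLocalRing.residue _),
      ← map_sub, IsLocalRing.residue_eq_zero_iff, mem_maximalIdeal_integers] at hpow

lemma not_dvd_card_residueField_pow_sub_one {n : ℕ} (hn : n ≠ 0) :
    ¬ p ∣ Nat.card (IsLocalRing.ResidueField (integers p F)) ^ n - 1 := by
  have := Fintype.ofFinite (IsLocalRing.ResidueField (integers p F))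
  have hcard : p ∣ Nat.card (IsLocalRing.ResidueField (integers p F)) ^ n := by
    refine dvd_pow ?_ hn
    rw [← CharP.cast_eq_zero_iff (IsLocalRing.ResidueField (integers p F)) p,
      Nat.card_eq_fintype_card, Nat.cast_card_eq_zero]
  rw [Nat.dvd_sub_iff_right (Nat.one_le_pow _ _ Nat.card_pos) hcard, Nat.dvd_one]
  exact (Fact.out : p.Prime).ne_one

end

variable {F : Type*} [Field F] [Algebra ℚ_[p] F] [FiniteDimensional ℚ_[p] F]
  {L : Type*} [Field L] [Algebra ℚ_[p] L] [FiniteDimensional ℚ_[p] L]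
  [Algebra F L] [IsScalarTower ℚ_[p] F L]

omit [FiniteDimensional ℚ_[p] F] in
lemma apply_eq_self_of_mem_inertia {g : Gal(L/F)} (hg : g ∈ inertia p F L) {N : ℕ} (hN : ¬ p ∣ N)
    {ζ : L} (hζ : ζ ^ N = 1) : g ζ = ζ := by
  have hN0 : N ≠ 0 := fun h0 => hN (h0 ▸ dvd_zero p)
  have habs := absVal_eq_one_of_pow_eq_one (p := p) hN0 hζ
  have hζ0 : ζ ≠ 0 := fun h0 => by simp [h0] at habs
  refine (div_eq_one_iff_eq hζ0).1 (eq_one_of_pow_eq_one_of_absVal_lt hN ?_ ?_)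
  · rw [div_pow, ← map_pow, hζ, map_one, div_one]
  · rw [div_sub_one hζ0, map_div₀, habs, div_one]
    exact (mem_inertia p).1 hg ζ habs.le

end RootsOfUnity

section Cyclotomic

variable {F K L : Type*} [Field F] [Field K] [Field L] [Algebra F K] [Algebra K L] [Algebra F L]
  [IsScalarTower F K L] {N : ℕ} [NeZero N] [IsCyclotomicExtension {N} K L]

lemma eq_one_of_restrictNormalHom_eq_one [Normal F K] {ζ : L} (hζ : IsPrimitiveRoot ζ N)
    {g : Gal(L/F)} (hK : AlgEquiv.restrictNormalHom K g = 1) (hgζ : g ζ = ζ) : g = 1 := by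
  have hcomm (x : K) : g (algebraMap K L x) = algebraMap K L x :=
    (AlgEquiv.restrictNormal_commutes g K x).symm.trans
      (congrArg _ (DFunLike.congr_fun hK x))
  let g' : Gal(L/K) := { g with commutes' := hcomm }
  have hg' : g'.toAlgHom = AlgHom.id K L := (hζ.powerBasis K).algHom_ext <| by
    rw [hζ.powerBasis_gen K]
    exact hgζ
  exact AlgEquiv.ext fun x => DFunLike.congr_fun hg' x

variable (F K L N) in
include K N in
lemma normal_of_isCyclotomicExtension [FiniteDimensional F K] [Normal F K] : Normal F L := by
  obtain ⟨f, hf0, hf⟩ : ∃ f : Polynomial F, f ≠ 0 ∧ Polynomial.IsSplittingField F K f := by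
    obtain ⟨f, hf⟩ := Normal.exists_isSplittingField F K
    rcases eq_or_ne f 0 with rfl | h0
    · exact ⟨1, one_ne_zero, by simp, by simpa using hf.adjoin_rootSet⟩
    · exact ⟨f, h0, hf⟩
  have : Polynomial.IsSplittingField K L
      ((Polynomial.X ^ N - 1 : Polynomial F).map (algebraMap F K)) := by
    simpa using IsCyclotomicExtension.isSplittingField_X_pow_sub_one N K L
  have := Polynomial.IsSplittingField.mul (F := F) (K := K) (L := L) f (Polynomial.X ^ N - 1) hf0
    (Polynomial.X_pow_sub_C_ne_zero (NeZero.pos N) 1)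
  exact Normal.of_isSplittingField (f * (Polynomial.X ^ N - 1))

open scoped IsMulCommutative in
lemma isAbelianGalois_of_isPrimitiveRoot [IsAbelianGalois F K] [IsGalois F L] {ζ : L}
    (hζ : IsPrimitiveRoot ζ N) : IsAbelianGalois F L where
  is_comm.comm s t := by
    let Φ : Gal(L/F) →* Gal(K/F) × (ZMod N)ˣ :=
      (AlgEquiv.restrictNormalHom K).prod (hζ.autToPow F)
    have hΦ : Function.Injective Φ := (injective_iff_map_eq_one Φ).2 fun g hg => by
      obtain ⟨hK, hpow⟩ := Prod.ext_iff.1 hg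
      refine eq_one_of_restrictNormalHom_eq_one hζ hK ?_
      have hpow' : hζ.autToPow F g = hζ.autToPow F 1 := hpow.trans (map_one _).symm
      rw [← hζ.autToPow_spec F g, hpow', hζ.autToPow_spec F, AlgEquiv.one_apply]
    exact hΦ (by rw [map_mul, map_mul, mul_comm])

end Cyclotomic

lemma exists_isCompl_zpowers {G : Type*} [Group G] {H : Subgroup G} [H.Normal] [IsCyclic (G ⧸ H)]
    (hexp : ∀ g : G, g ^ H.index = 1) :
    ∃ g : G, orderOf g = H.index ∧ IsCompl (Subgroup.zpowers g) H := by
  obtain ⟨c, hc⟩ := IsCyclic.exists_generator (α := G ⧸ H)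
  obtain ⟨g, rfl⟩ := QuotientGroup.mk_surjective c
  have horder : orderOf (g : G ⧸ H) = H.index := orderOf_eq_card_of_forall_mem_zpowers hc
  have hg : orderOf g = H.index := Nat.dvd_antisymm (orderOf_dvd_of_pow_eq_one (hexp g))
    (horder ▸ orderOf_map_dvd (QuotientGroup.mk' H) g)
  refine ⟨g, hg, ?_, ?_⟩
  · rw [Subgroup.disjoint_def]
    rintro _ ⟨k, rfl⟩ hk
    rw [← QuotientGroup.eq_one_iff, QuotientGroup.mk_zpow, ← orderOf_dvd_iff_zpow_eq_one, horder,
      ← hg] at hk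
    exact orderOf_dvd_iff_zpow_eq_one.1 hk
  · refine codisjoint_iff.2 (eq_top_iff.2 fun x _ => ?_)
    obtain ⟨k, hk⟩ := hc x
    rw [← mul_inv_cancel_left (g ^ k) x]
    exact Subgroup.mul_mem_sup ⟨k, rfl⟩ (QuotientGroup.eq.1 hk)

lemma dvd_of_pow_sub_one_dvd_pow_sub_one {q : ℕ} (hq : 1 < q) {n m : ℕ}
    (h : q ^ n - 1 ∣ q ^ m - 1) : n ∣ m := by
  rw [Nat.dvd_iff_mod_eq_zero, Nat.pow_sub_one_mod_pow_sub_one, Nat.sub_eq_zero_iff_le,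
    ← pow_zero q, Nat.pow_le_pow_iff_right hq, Nat.le_zero] at h
  exact Nat.dvd_of_mod_eq_zero h

section CyclotomicTwist

section

variable {p : ℕ} [Fact p.Prime] {L : Type*} [Field L] [Algebra ℚ_[p] L] [FiniteDimensional ℚ_[p] L]
  {N : ℕ} [NeZero N]

lemma pow_index_inertia_eq_one (F K : Type*) [Field F] [Algebra ℚ_[p] F] [Field K]
    [Algebra F K] [FiniteDimensional F K] [IsGalois F K] [Algebra K L] [Algebra F L]
    [IsScalarTower ℚ_[p] F L] [IsScalarTower F K L] [IsCyclotomicExtension {N} K L]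
    (hN : ¬ p ∣ N) {ζ : L} (hζ : IsPrimitiveRoot ζ N)
    (hdvd : Module.finrank F K ∣ (inertia p F L).index) (g : Gal(L/F)) :
    g ^ (inertia p F L).index = 1 := by
  refine eq_one_of_restrictNormalHom_eq_one (K := K) hζ ?_
    (apply_eq_self_of_mem_inertia (Subgroup.pow_index_mem _ g) hN hζ.pow_eq_one)
  rw [map_pow, ← orderOf_dvd_iff_pow_eq_one]
  exact (orderOf_dvd_natCard _).trans ((IsGalois.card_aut_eq_finrank F K).dvd.trans hdvd)

lemma inertia_eq_bot_of_isPrimitiveRoot {K : Type*} [Field K] [Algebra ℚ_[p] K] [Algebra K L]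
    [IsScalarTower ℚ_[p] K L] [IsCyclotomicExtension {N} K L] (hN : ¬ p ∣ N) {ζ : L}
    (hζ : IsPrimitiveRoot ζ N) : inertia p K L = ⊥ := by
  refine (Subgroup.eq_bot_iff_forall _).2 fun g hg => ?_
  exact eq_one_of_restrictNormalHom_eq_one (K := K) hζ (Subsingleton.elim _ _)
    (apply_eq_self_of_mem_inertia hg hN hζ.pow_eq_one)

end

variable {p : ℕ} [Fact p.Prime]
  {F : Type*} [Field F] [Algebra ℚ_[p] F] [FiniteDimensional ℚ_[p] F]
  {K : Type*} [Field K] [Algebra ℚ_[p] K] [FiniteDimensional ℚ_[p] K]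
  {L : Type*} [Field L] [Algebra ℚ_[p] L] [FiniteDimensional ℚ_[p] L]
  [Algebra F K] [IsScalarTower ℚ_[p] F K] [FiniteDimensional F K]
  [Algebra F L] [IsScalarTower ℚ_[p] F L] [FiniteDimensional F L]
  [Algebra K L] [IsScalarTower ℚ_[p] K L] [FiniteDimensional K L] [IsScalarTower F K L]

lemma dvd_index_inertia [IsGalois F L] {n : ℕ} (hn : n ≠ 0) {ζ : L} (hζ : IsPrimitiveRoot ζ
    (Nat.card (IsLocalRing.ResidueField (integers p F)) ^ n - 1)) :
    n ∣ (inertia p F L).index := by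
  refine dvd_of_pow_sub_one_dvd_pow_sub_one Finite.one_lt_card
    (q := Nat.card (IsLocalRing.ResidueField (integers p F))) ?_
  rw [card_residueField_pow_index_inertia]
  exact dvd_card_residueField_sub_one (not_dvd_card_residueField_pow_sub_one hn) hζ

variable {N : ℕ} [NeZero N] [IsCyclotomicExtension {N} K L]

lemma map_unitsNorm_eq_of_inertia_eq_bot [IsAbelianGalois K L] (h : inertia p K L = ⊥) :
    (unitGroup p L).map (unitsNorm K L) = unitGroup p K := by
  have hdvd := relIndex_map_unitsNorm_dvd (p := p) (F := K) L
  rw [ramificationIndex_eq_one h, Nat.dvd_one, Subgroup.relIndex_eq_one] at hdvd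
  exact le_antisymm map_unitsNorm_le hdvd

variable (F K L) in
lemma relIndex_map_unitsNorm_of_isPrimitiveRoot [IsAbelianGalois F K] [IsGalois F L]
    (hN : N = Nat.card (IsLocalRing.ResidueField (integers p F)) ^ Module.finrank F K - 1) :
    ((unitGroup p K).map (unitsNorm F K)).relIndex (unitGroup p F) = ramificationIndex p F K := by
  obtain ⟨ζ, hζ⟩ : ∃ ζ : L, IsPrimitiveRoot ζ N := ⟨_, IsCyclotomicExtension.zeta_spec N K L⟩
  have hpN : ¬ p ∣ N := hN ▸ not_dvd_card_residueField_pow_sub_one Module.finrank_pos.ne'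
  have := isAbelianGalois_of_isPrimitiveRoot (F := F) (K := K) hζ
  have : IsAbelianGalois K L := .tower_top F K L
  have hexp := pow_index_inertia_eq_one F K hpN hζ
    (dvd_index_inertia Module.finrank_pos.ne' (hN ▸ hζ))
  obtain ⟨φ, hφ, hcompl⟩ := exists_isCompl_zpowers hexp
  have hL := relIndex_map_unitsNorm_of_isCompl hcompl fun g _ => hφ ▸ hexp g
  have hbot := inertia_eq_bot_of_isPrimitiveRoot (K := K) hpN hζ
  have htrans : (unitsNorm F K).comp (unitsNorm K L) = unitsNorm F L :=
    MonoidHom.ext unitsNorm_unitsNorm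
  rwa [← htrans, ← Subgroup.map_map, map_unitsNorm_eq_of_inertia_eq_bot hbot,
    ← ramificationIndex_mul p F K L, ramificationIndex_eq_one hbot, mul_one] at hL

end CyclotomicTwist

theorem relIndex_map_unitsNorm (p : ℕ) [Fact p.Prime]
    (F : Type*) [Field F] [Algebra ℚ_[p] F] [FiniteDimensional ℚ_[p] F]
    (K : Type*) [Field K] [Algebra ℚ_[p] K] [FiniteDimensional ℚ_[p] K]
    [Algebra F K] [IsScalarTower ℚ_[p] F K] [FiniteDimensional F K] [IsAbelianGalois F K] :
    ((unitGroup p K).map (unitsNorm F K)).relIndex (unitGroup p F) = ramificationIndex p F K := by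
  have : CharZero F := charZero_of_injective_algebraMap (algebraMap ℚ_[p] F).injective
  have : CharZero K := charZero_of_injective_algebraMap (algebraMap ℚ_[p] K).injective
  obtain ⟨N, hN⟩ : ∃ N, N =
    Nat.card (IsLocalRing.ResidueField (integers p F)) ^ Module.finrank F K - 1 := ⟨_, rfl⟩
  have : NeZero N := ⟨hN ▸ (Nat.sub_pos_of_lt
    (Nat.one_lt_pow Module.finrank_pos.ne' Finite.one_lt_card)).ne'⟩
  let L := CyclotomicField N K
  have : IsScalarTower ℚ_[p] F L := .to₁₂₄ ℚ_[p] F K L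
  have : FiniteDimensional K L := IsCyclotomicExtension.finiteDimensional {N} K L
  have : FiniteDimensional F L := .trans F K L
  have : FiniteDimensional ℚ_[p] L := .trans ℚ_[p] K L
  have : Normal F L := normal_of_isCyclotomicExtension F K L N
  have : IsGalois F L := {}
  exact relIndex_map_unitsNorm_of_isPrimitiveRoot F K L hN

section Tame

variable {p : ℕ} [Fact p.Prime] {F : Type*} [Field F] [Algebra ℚ_[p] F] [FiniteDimensional ℚ_[p] F]

lemma valuation_integers_lt_one_iff {x : F} :
    (integers p F).valuation x < 1 ↔ absVal p F x < 1 := by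
  by_cases hx : x ∈ integers p F
  · lift x to integers p F using hx
    rw [← ValuationSubring.valuation_lt_one_iff, mem_maximalIdeal_integers]
  · exact iff_of_false (fun h => hx ((integers p F).mem_of_valuation_le_one x h.le))
      fun h => hx h.le

lemma unitGroup_integers : (integers p F).unitGroup = unitGroup p F := by
  ext x
  rw [ValuationSubring.mem_unitGroup_iff, mem_unitGroup, le_antisymm_iff, le_antisymm_iff,
    ValuationSubring.valuation_le_one_iff, ← not_lt, valuation_integers_lt_one_iff, not_lt,
    mem_integers]

lemma mem_principalUnitGroup_integers {u : Fˣ} :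
    u ∈ (integers p F).principalUnitGroup ↔ absVal p F (u - 1) < 1 := by
  rw [ValuationSubring.mem_principalUnitGroup_iff, valuation_integers_lt_one_iff]

lemma absVal_sub_one_add_pow_le {e : ℕ} {x : F} (hx : absVal p F x ≤ 1) :
    absVal p F ((1 + x) ^ e - (1 + e * x)) ≤ absVal p F x ^ 2 := by
  obtain ⟨y, hy⟩ := Polynomial.powAddExpansion 1 (⟨x, hx⟩ : integers p F) e
  have hsplit : (1 + x) ^ e - (1 + e * x) = y * x ^ 2 := by
    simpa [add_assoc, sub_eq_iff_eq_add'] using congrArg Subtype.val hy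
  rw [hsplit, map_mul, map_pow]
  exact mul_le_of_le_one_left (sq_nonneg _) y.2

lemma principalUnitGroup_le_map_pow {e : ℕ} (he : ¬ p ∣ e) :
    (integers p F).principalUnitGroup ≤
      (integers p F).principalUnitGroup.map (powMonoidHom e) := by
  obtain ⟨π, hπ⟩ := exists_isUniformizer (p := p) F
  have hw : IsNonarchimedean (absVal p F).toAlgebraNorm := isNonarchimedean_absVal p
  have hρ : absVal p F π ∈ Set.Ioo 0 1 := ⟨absVal_pos p π.ne_zero, hπ.lt_one⟩
  have hU : (integers p F).principalUnitGroup = unitFiltration hw hρ 0 := by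
    ext u
    rw [mem_principalUnitGroup_integers, mem_unitFiltration, zero_add, pow_one]
    exact ⟨hπ.absVal_le, fun h => h.trans_lt hπ.lt_one⟩
  rw [hU, ← top_inf_eq (unitFiltration hw hρ 0)]
  refine (inf_le_map_of_approx (powMonoidHom e) (exists_div_prod_mem_unitFiltration hw hρ)
    (iInf_unitFiltration hw hρ) ?_ le_top ?_).trans_eq (by rw [top_inf_eq])
  · rintro n _ ⟨u, hu, rfl⟩
    exact pow_mem hu e
  · rintro n a ⟨-, ha⟩
    have he1 : absVal p F e = 1 := (absVal_natCast_le_one p e).antisymm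
      (not_lt.1 (mt (absVal_natCast_lt_one_iff p).1 he))
    have he0 : (e : F) ≠ 0 := (map_ne_zero (absVal p F)).1 (he1 ▸ one_ne_zero)
    have hx : absVal p F ((a - 1) / e) ≤ absVal p F π ^ (n + 1) := by
      rw [map_div₀, he1, div_one]
      exact ha
    have hx1 := hx.trans_lt (pow_lt_one₀ hρ.1.le hρ.2 n.succ_ne_zero)
    obtain ⟨b, hb⟩ := exists_unit_eq_one_add (w := (absVal p F).toAlgebraNorm) hx1
    have hbV : b ∈ unitFiltration hw hρ n := by
      rw [mem_unitFiltration, hb, add_sub_cancel_left]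
      exact hx
    refine ⟨b, hbV, div_mem_unitFiltration hw hρ
      (pow_mem (unitFiltration_antitone hw hρ n.zero_le hbV) e) ?_⟩
    calc absVal p F (a - (b ^ e : Fˣ))
        = absVal p F ((1 + (a - 1) / e) ^ e - (1 + e * ((a - 1) / e))) := by
          rw [Units.val_pow_eq_pow_val, hb, mul_div_cancel₀ _ he0, add_sub_cancel, map_sub_rev]
      _ ≤ absVal p F ((a - 1) / e) ^ 2 := absVal_sub_one_add_pow_le hx1.le
      _ ≤ (absVal p F π ^ (n + 1)) ^ 2 := by gcongr
      _ ≤ absVal p F π ^ (n + 1 + 1) := by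
        rw [← pow_mul]
        exact pow_le_pow_of_le_one hρ.1.le hρ.2.le (by omega)

lemma isCyclic_unitGroup_quotient {W : Subgroup Fˣ} (hW : ¬ p ∣ W.relIndex (unitGroup p F)) :
    IsCyclic (unitGroup p F ⧸ W.subgroupOf (unitGroup p F)) := by
  rw [← unitGroup_integers] at hW ⊢
  have hle : (integers p F).principalUnitGroup ≤ W := fun u hu => by
    obtain ⟨b, hb, rfl⟩ := principalUnitGroup_le_map_pow hW hu
    have hbU := (integers p F).principal_units_le_units hb
    exact W.subgroupOf (integers p F).unitGroup |>.pow_index_mem ⟨b, hbU⟩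
  have : IsCyclic ((integers p F).unitGroup ⧸
      (integers p F).principalUnitGroup.subgroupOf (integers p F).unitGroup) :=
    isCyclic_of_injective (integers p F).unitsModPrincipalUnitsEquivResidueFieldUnits.toMonoidHom
      (MulEquiv.injective _)
  exact isCyclic_of_surjective _
    (QuotientGroup.map_surjective_of_surjective
      ((integers p F).principalUnitGroup.subgroupOf (integers p F).unitGroup) (W.subgroupOf _)
      (MonoidHom.id _) QuotientGroup.mk_surjective fun _ hu => hle hu)

end Tame

section Valuations

variable {p : ℕ} [Fact p.Prime]

section

variable {F : Type*} [Field F] [Algebra ℚ_[p] F] [FiniteDimensional ℚ_[p] F] [Algebra ℤ_[p] F]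
  [IsScalarTower ℤ_[p] ℚ_[p] F]

lemma integerUnits_eq_unitGroup : integerUnits ℤ_[p] F = unitGroup p F := by
  ext x
  have hmem : x ∈ integerUnits ℤ_[p] F ↔
    IsIntegral ℤ_[p] (x : F) ∧ IsIntegral ℤ_[p] ((x⁻¹ : Fˣ) : F) := Iff.rfl
  rw [hmem, isIntegral_iff_absVal_le_one, isIntegral_iff_absVal_le_one, mem_unitGroup,
    le_antisymm_iff, Units.val_inv_eq_inv_val, map_inv₀, inv_le_one₀ (absVal_pos p x.ne_zero)]

lemma unitGroup_eq_ker_of_isIntegral_iff {ord : Fˣ →* Multiplicative ℤ}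
    (hord : ∀ x : Fˣ, IsIntegral ℤ_[p] (x : F) ↔ 0 ≤ (ord x).toAdd) : unitGroup p F = ord.ker := by
  ext x
  rw [← integerUnits_eq_unitGroup]
  change IsIntegral ℤ_[p] (x : F) ∧ IsIntegral ℤ_[p] ((x⁻¹ : Fˣ) : F) ↔ _
  rw [hord, hord, map_inv, toAdd_inv, Left.nonneg_neg_iff, MonoidHom.mem_ker, ← toAdd_eq_zero,
    le_antisymm_iff, and_comm]

end

section

variable {F K : Type*} [Field F] [Algebra ℚ_[p] F] [FiniteDimensional ℚ_[p] F] [Field K]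
  [Algebra ℚ_[p] K] [FiniteDimensional ℚ_[p] K] [Algebra F K] [IsScalarTower ℚ_[p] F K]

lemma ramificationIndex_eq_of_unitGroup_eq_ker {ordF : Fˣ →* Multiplicative ℤ}
    (hordF : Function.Surjective ordF) {ordK : Kˣ →* Multiplicative ℤ}
    (hordK : Function.Surjective ordK) (hker : unitGroup p K = ordK.ker) {e : ℕ}
    (he : ∀ x, ordK (unitsAlgebraMap F K x) = ordF x ^ e) : ramificationIndex p F K = e := by
  have hrange : (unitsAlgebraMap F K).range.map ordK =
      (AddSubgroup.zmultiples (e : ℤ)).toSubgroup := by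
    have hpow : ordK.comp (unitsAlgebraMap F K) = (powMonoidHom e).comp ordF := MonoidHom.ext he
    rw [MonoidHom.map_range, hpow, MonoidHom.range_comp, MonoidHom.range_eq_top.2 hordF,
      ← MonoidHom.range_eq_map]
    ext n
    change (∃ m : ℤ, e • m = n.toAdd) ↔ n.toAdd ∈ AddSubgroup.zmultiples (e : ℤ)
    simp only [Int.mem_zmultiples_iff, dvd_def, nsmul_eq_mul, eq_comm]
  rw [ramificationIndex_eq_index, hker, ← Subgroup.comap_map_eq, hrange,
    Subgroup.index_comap_of_surjective _ hordK, AddSubgroup.index_toSubgroup, Int.index_zmultiples,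
    Int.natAbs_natCast]

lemma relIndex_range_unitsNorm [FiniteDimensional F K] [IsGalois F K] :
    (unitsNorm F K).range.relIndex (unitGroup p F) =
      ((unitGroup p K).map (unitsNorm F K)).relIndex (unitGroup p F) := by
  rw [← Subgroup.inf_relIndex_right]
  congr 1
  ext x
  constructor
  · rintro ⟨⟨y, rfl⟩, hy⟩
    exact ⟨y, unitsNorm_mem_unitGroup.1 hy, rfl⟩
  · rintro ⟨y, hy, rfl⟩
    exact ⟨⟨y, rfl⟩, unitsNorm_mem_unitGroup.2 hy⟩

end

end Valuations

end PadicField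

/-- Let `F` be a finite extension of `ℚ_p` and `K/F` a finite abelian
extension. Then `𝒪_F^× ∩ N_{K/F}(K^×)` has finite index in `𝒪_F^×`, equal to the ramification
index `e(K/F)`; if moreover `K/F` is tamely ramified (`p ∤ e(K/F)`), then
`𝒪_F^×/(𝒪_F^× ∩ N_{K/F}(K^×))` is cyclic.

The normalized valuations `ord_F`, `ord_K` are characterized by being surjective homomorphisms
which are nonnegative exactly on the nonzero integers (= elements integral over `ℤ_p`), and the
ramification index `e` is characterized by `ord_K(x) = e·ord_F(x)` for `x ∈ F^×`, which is
equivalent to the usual definition `𝔪_F 𝒪_K = 𝔪_K^e`. -/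
theorem stmt_2 (p : ℕ) [Fact p.Prime]
    (F : Type*) [Field F] [Algebra ℚ_[p] F] [FiniteDimensional ℚ_[p] F]
    [Algebra ℤ_[p] F] [IsScalarTower ℤ_[p] ℚ_[p] F]
    (K : Type*) [Field K] [Algebra F K] [FiniteDimensional F K] [IsGalois F K]
    [Algebra ℚ_[p] K] [IsScalarTower ℚ_[p] F K]
    [Algebra ℤ_[p] K] [IsScalarTower ℤ_[p] ℚ_[p] K]
    (habelian : ∀ σ τ : K ≃ₐ[F] K, σ * τ = τ * σ)
    (ordF : Fˣ → ℤ) (hordF_mul : ∀ x y : Fˣ, ordF (x * y) = ordF x + ordF y)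
    (hordF_surj : Function.Surjective ordF)
    (hordF_int : ∀ x : Fˣ, IsIntegral ℤ_[p] ((x : Fˣ) : F) ↔ 0 ≤ ordF x)
    (ordK : Kˣ → ℤ) (hordK_mul : ∀ x y : Kˣ, ordK (x * y) = ordK x + ordK y)
    (hordK_surj : Function.Surjective ordK)
    (hordK_int : ∀ x : Kˣ, IsIntegral ℤ_[p] ((x : Kˣ) : K) ↔ 0 ≤ ordK x)
    (e : ℕ) (he : ∀ x : Fˣ, ordK (Units.map (algebraMap F K).toMonoidHom x) = e * ordF x) :
    ((Units.map (Algebra.norm F : K →* F)).range.subgroupOf (integerUnits ℤ_[p] F)).index = e ∧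
    ((Units.map (Algebra.norm F : K →* F)).range.subgroupOf (integerUnits ℤ_[p] F)).index ≠ 0 ∧
    (¬ p ∣ e →
      IsCyclic (↥(integerUnits ℤ_[p] F) ⧸
        (Units.map (Algebra.norm F : K →* F)).range.subgroupOf (integerUnits ℤ_[p] F))) := by
  have : FiniteDimensional ℚ_[p] K := .trans ℚ_[p] F K
  have : IsAbelianGalois F K := { is_comm.comm := habelian }
  have hram : PadicField.ramificationIndex p F K = e :=
    PadicField.ramificationIndex_eq_of_unitGroup_eq_ker
      (ordF := .mk' (fun x => .ofAdd (ordF x)) hordF_mul) hordF_surj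
      (ordK := .mk' (fun x => .ofAdd (ordK x)) hordK_mul) hordK_surj
      (PadicField.unitGroup_eq_ker_of_isIntegral_iff hordK_int) fun x =>
        congrArg Multiplicative.ofAdd ((he x).trans (nsmul_eq_mul e (ordF x)).symm)
  have hindex : (PadicField.unitsNorm F K).range.relIndex (PadicField.unitGroup p F) = e := by
    rw [PadicField.relIndex_range_unitsNorm, PadicField.relIndex_map_unitsNorm, hram]
  rw [PadicField.integerUnits_eq_unitGroup]
  exact ⟨hindex, hindex.trans_ne (hram ▸ PadicField.ramificationIndex_pos.ne'),
    fun hp => PadicField.isCyclic_unitGroup_quotient (hindex.symm ▸ hp)⟩
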